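/- arXiv:1901.04688 — 3 statements merged into one kernel-verified Lean document; each statement's English description precedes it below -/
import Mathlib

section
/- There exist sequences of integers (n_i)_{i≥0} with n_0 = 2 and (ℓ_i)_{i≥0} with ℓ_0 = 2, and binary words w_{i,j} ∈ {0,1}^{ℓ_i} for 0 ≤ j < n_i, with w_{0,0} = 01 and w_{0,1} = 11, such that, writing W_i = {w_{i,j} : 0 ≤ j < n_i} and, for k ≥ 1 and g ≥ 0, L_{i,k,g} = (W_i · {0^a : 0 ≤ a ≤ g})^{k−1} · W_i (concatenation languages, 0^a the word of a zeros, ε the empty word), the following hold: for every i ≥ 0, (a) H(w_{i,j}, w_{i,j+1}) = 1 for all 0 ≤ j ≤ n_i − 2, and (b) H(w_{i,0} · 0, 0 · w_{i,n_i−1}) = 1; for every i ≥ 1, (c) every word of W_{i−1} · W_{i−1} is a factor of every word of W_i, and (d) there exists k ≥ 1 with W_i ⊆ L_{i−1,k,1} · {ε, 0} and w_{i,0} ∈ L_{i−1,k,1}; and moreover for every i ≥ 0 and every m ≥ i + 1 there exists k ≥ 1 with W_m ⊆ L_{i,k,2} · {ε, 0} and w_{m,0} ∈ L_{i,k,2}.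 -/
/-!
Existence of the hierarchy of word families `W_i = {w_{i,0}, …, w_{i,n_i−1}} ⊆ {0,1}^{ℓ_i}`
used to build a language-connected minimal subshift: each level forms a Hamming path with
the wrap-around property, each level-`i` word contains every product of two level-`(i−1)`
words as a factor, each level decomposes over the previous level with gaps of at most one
zero (and trailing gap controlled), and Property A: every level-`m` word decomposes into
level-`i` words separated by gaps of at most two zeros, with trailing gap at most one zero
and no trailing gap for `w_{m,0}`.
-/

/-- Hamming distance between two binary words (of equal length) given as lists. -/
def hammingL (u v : List Bool) : ℕ :=
  (List.zipWith (fun a b => if a = b then 0 else 1) u v).sum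

/-- Concatenation of languages: `A · B = {u ++ v : u ∈ A, v ∈ B}`. -/
def lmul (A B : Set (List Bool)) : Set (List Bool) :=
  {w | ∃ u ∈ A, ∃ v ∈ B, w = u ++ v}

/-- Concatenation power of a language: `A^0 = {ε}`, `A^{k+1} = A · A^k`. -/
def lpow (A : Set (List Bool)) : ℕ → Set (List Bool)
  | 0 => {[]}
  | k + 1 => lmul A (lpow A k)

/-- `{0^a : 0 ≤ a ≤ g}`, the words of at most `g` zeros. -/
def zerosUpTo (g : ℕ) : Set (List Bool) :=
  {z | ∃ a ≤ g, z = List.replicate a false}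

/-- `L_{W,k,g} = (W · {ε, 0, …, 0^g})^{k−1} · W`. -/
def LL (W : Set (List Bool)) (k g : ℕ) : Set (List Bool) :=
  lmul (lpow (lmul W (zerosUpTo g)) (k - 1)) W

/-- `W_i = {w_{i,j} : 0 ≤ j < n_i}`. -/
def Wset (nseq : ℕ → ℕ) (w : ℕ → ℕ → List Bool) (i : ℕ) : Set (List Bool) :=
  {v | ∃ j < nseq i, v = w i j}

/-!
Given a level with words `x_0, …, x_{n-1}`, let `P` be a concatenation of its words in which every
`x_a x_b` occurs. The next level is a path from `x_0 0 P P x_0` to `x_{n-1} P P x_0 0`. The first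
factor runs from `x_0` to `x_{n-1}`, and then the zero moves to the right past one factor `x` at
a time: `0 x` is joined to `0 x_{n-1}` along the old path, `0 x_{n-1}` is adjacent to `x_0 0` by the
wrap-around property, and `x_0 0` is joined to `x 0`. While the zero moves through one copy of `P`,
the other copy supplies all the factors `x_a x_b`. Since the first and last words of the new path
are `x_0 · 0 · Q` and `x_{n-1} · Q · 0` with `Q = P P x_0`, the wrap-around property is inherited.

A word on this path ends in a zero only if its last factor is `x_0`. As `x_0` in turn has no
trailing zero over the lower levels, trailing zeros never accumulate, and the gaps seen from any
lower level have length at most `1 + 1 = 2`.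
-/

section Joined

variable {α β : Type*} {r : α → α → Prop} {S : Set α} {x y z : α}

/-- `x` and `y` are joined by a finite path of `r`-steps, each of them between elements of `S`. -/
def JoinedWithin (r : α → α → Prop) (S : Set α) : α → α → Prop :=
  Relation.ReflTransGen fun u v => u ∈ S ∧ v ∈ S ∧ r u v

theorem JoinedWithin.refl (x : α) : JoinedWithin r S x x :=
  Relation.ReflTransGen.refl

theorem JoinedWithin.trans (hxy : JoinedWithin r S x y) (hyz : JoinedWithin r S y z) :
    JoinedWithin r S x z :=
  Relation.ReflTransGen.trans hxy hyz

theorem JoinedWithin.symm [Std.Symm r] (h : JoinedWithin r S x y) : JoinedWithin r S y x := by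
  have : Std.Symm fun u v => u ∈ S ∧ v ∈ S ∧ r u v :=
    ⟨fun _ _ ⟨hu, hv, huv⟩ => ⟨hv, hu, Std.Symm.symm _ _ huv⟩⟩
  exact Std.Symm.symm (r := Relation.ReflTransGen _) _ _ h

theorem JoinedWithin.map {r' : β → β → Prop} {T : Set β} {f : α → β}
    (hr : ∀ u v, r u v → r' (f u) (f v)) (hf : Set.MapsTo f S T) (h : JoinedWithin r S x y) :
    JoinedWithin r' T (f x) (f y) :=
  Relation.ReflTransGen.lift f (fun _ _ ⟨hu, hv, huv⟩ => ⟨hf hu, hf hv, hr _ _ huv⟩) _ _ h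

theorem JoinedWithin.exists_isChain (h : JoinedWithin r S x y) (hx : x ∈ S) :
    ∃ l, (x :: l).IsChain r ∧ (x :: l).getLast (List.cons_ne_nil x l) = y ∧
      ∀ u ∈ x :: l, u ∈ S := by
  induction h using Relation.ReflTransGen.head_induction_on with
  | refl => exact ⟨[], by simpa using hx⟩
  | @head u v huv _ ih =>
    obtain ⟨l, hchain, hlast, hl⟩ := ih huv.2.1
    exact ⟨v :: l, hchain.cons_cons huv.2.2, by simpa using hlast,
      List.forall_mem_cons.mpr ⟨hx, hl⟩⟩

theorem JoinedWithin.of_isChain_cons {l : List α} (h : (x :: l).IsChain r) (hy : y ∈ x :: l) :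
    JoinedWithin r {u | u ∈ x :: l} x y := by
  induction l generalizing x with
  | nil => rw [List.mem_singleton.mp hy]; exact .refl _
  | cons z l ih =>
    rw [List.isChain_cons_cons] at h
    rcases List.mem_cons.mp hy with rfl | hy
    · exact .refl _
    · exact Relation.ReflTransGen.head ⟨by simp, by simp, h.1⟩
        ((ih h.2 hy).map (fun _ _ => id) fun _ hu => List.mem_cons_of_mem x hu)

end Joined

section Hamming

theorem hammingL_append {u v : List Bool} (h : u.length = v.length) (u' v' : List Bool) :
    hammingL (u ++ u') (v ++ v') = hammingL u v + hammingL u' v' := by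
  rw [hammingL, List.zipWith_append h, List.sum_append, hammingL, hammingL]

theorem hammingL_self (u : List Bool) : hammingL u u = 0 := by
  simp [hammingL, List.zipWith_self]

theorem hammingL_comm (u v : List Bool) : hammingL u v = hammingL v u := by
  rw [hammingL, List.zipWith_comm, hammingL]
  simp only [eq_comm]

/-- Two words are adjacent if they differ in exactly one letter. The lengths are compared
separately because `hammingL` ignores the end of the longer word. -/
def HammingAdj (u v : List Bool) : Prop :=
  u.length = v.length ∧ hammingL u v = 1

instance : Std.Symm HammingAdj :=
  ⟨fun u v h => ⟨h.1.symm, hammingL_comm v u ▸ h.2⟩⟩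

theorem HammingAdj.append_append {u v : List Bool} (h : HammingAdj u v) (p s : List Bool) :
    HammingAdj (p ++ u ++ s) (p ++ v ++ s) := by
  refine ⟨by simp [h.1], ?_⟩
  rw [hammingL_append (by simp [h.1]), hammingL_append rfl, hammingL_self, hammingL_self, h.2]

end Hamming

section Language

/-- The language `{0^a : a ≤ g}`, viewed in the semiring `Language Bool`. -/
def zeros (g : ℕ) : Language Bool :=
  zerosUpTo g

theorem replicate_mem_zeros {a g : ℕ} (h : a ≤ g) : List.replicate a false ∈ zeros g :=
  ⟨a, h, rfl⟩

theorem one_le_zeros (g : ℕ) : 1 ≤ zeros g := by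
  rintro _ rfl
  exact replicate_mem_zeros g.zero_le

theorem zeros_mul_zeros_le {a b g : ℕ} (h : a + b ≤ g) : zeros a * zeros b ≤ zeros g := by
  rintro _ ⟨_, ⟨c, hc, rfl⟩, _, ⟨d, hd, rfl⟩, rfl⟩
  exact ⟨c + d, by lia, List.replicate_append_replicate⟩

theorem zeros_one : zeros 1 = {[], [false]} := by
  ext z
  constructor
  · rintro ⟨a, ha, rfl⟩
    interval_cases a
    exacts [Or.inl rfl, Or.inr rfl]
  · rintro (rfl | rfl)
    exacts [replicate_mem_zeros zero_le_one, replicate_mem_zeros le_rfl]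

theorem lmul_eq_mul (A B : Language Bool) : lmul A B = A * B := by
  ext w
  exact ⟨fun ⟨u, hu, v, hv, h⟩ => ⟨u, hu, v, hv, h.symm⟩,
    fun ⟨u, hu, v, hv, h⟩ => ⟨u, hu, v, hv, h.symm⟩⟩

theorem lpow_eq_pow (A : Language Bool) : ∀ k : ℕ, lpow A k = A ^ k
  | 0 => rfl
  | k + 1 => (lmul_eq_mul A (lpow A k)).trans (by rw [lpow_eq_pow A k, pow_succ'])

theorem LL_succ (W : Language Bool) (k g : ℕ) : LL W (k + 1) g = (W * zeros g) ^ k * W := by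
  rw [← lmul_eq_mul, ← lpow_eq_pow, ← lmul_eq_mul]
  rfl

theorem exists_flatten_infix_append {α : Type*} (l : List (List α)) :
    ∃ P : List (List α), (∀ u ∈ P, u ∈ l) ∧ ∀ u ∈ l, ∀ v ∈ l, u ++ v <:+: P.flatten := by
  refine ⟨((l ×ˢ l).map fun uv => [uv.1, uv.2]).flatten, by grind [List.mem_product],
    fun u hu v hv => ?_⟩
  rw [List.flatten_flatten, List.map_map]
  exact List.infix_of_mem_flatten
    (List.mem_map.mpr ⟨(u, v), List.mem_product.mpr ⟨hu, hv⟩, by simp⟩)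

end Language

/-- One family `W_i` of the hierarchy, as the list `w_{i,0}, …, w_{i,n_i-1}` with its head split
off: consecutive words are adjacent, and `w_{i,0} · 0` is adjacent to `0 · w_{i,n_i-1}`. -/
structure WordLevel where
  first : List Bool
  tail : List (List Bool)
  isChain : (first :: tail).IsChain HammingAdj
  wrap : HammingAdj (first ++ [false])
    (false :: (first :: tail).getLast (List.cons_ne_nil first tail))

namespace WordLevel

variable (L : WordLevel)

/-- The words of the level, in order. -/
def words : List (List Bool) :=
  L.first :: L.tail

/-- The last word of the level. -/
def last : List Bool :=
  L.words.getLast (List.cons_ne_nil L.first L.tail)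

/-- The set `W_i` of words of the level, as a language. -/
def lang : Language Bool :=
  {v | v ∈ L.words}

theorem first_mem_lang : L.first ∈ L.lang :=
  List.mem_cons_self

theorem last_mem_lang : L.last ∈ L.lang :=
  List.getLast_mem _

theorem zero_last_adj_first_zero : HammingAdj (false :: L.last) (L.first ++ [false]) :=
  Std.Symm.symm _ _ L.wrap

variable {L} {a b n : ℕ} {p s q x y : List Bool}

theorem joinedWithin_lang (hx : x ∈ L.lang) (hy : y ∈ L.lang) :
    JoinedWithin HammingAdj L.lang x y :=
  (JoinedWithin.of_isChain_cons L.isChain hx).symm.trans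
    (JoinedWithin.of_isChain_cons L.isChain hy)

theorem joinedWithin_append_append {T : Set (List Bool)} (hx : x ∈ L.lang) (hy : y ∈ L.lang)
    (hT : ∀ u ∈ L.lang, p ++ u ++ s ∈ T) :
    JoinedWithin HammingAdj T (p ++ x ++ s) (p ++ y ++ s) :=
  (joinedWithin_lang hx hy).map (f := fun u => p ++ u ++ s)
    (fun _ _ huv => huv.append_append p s) hT

theorem length_eq_length_first (hx : x ∈ L.lang) : x.length = L.first.length := by
  induction joinedWithin_lang L.first_mem_lang hx with
  | refl => rfl
  | tail _ h ih => exact h.2.2.1.symm.trans (ih h.1)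

/-- Words of the level followed by a gap of at most one zero. -/
def gapped (L : WordLevel) : Language Bool :=
  L.lang * zeros 1

/-- Concatenations of `n + 1` words of the level with gaps of at most one zero, where a zero may
follow the final word only if that word is `w_{i,0}`. -/
def spaced (L : WordLevel) (n : ℕ) : Language Bool :=
  L.gapped ^ n * (L.lang + {L.first ++ [false]})

theorem lang_le_gapped (L : WordLevel) : L.lang ≤ L.gapped :=
  le_mul_of_one_le_right' (one_le_zeros 1)

theorem spaced_add (L : WordLevel) (m n : ℕ) : L.spaced (m + n) = L.gapped ^ m * L.spaced n := by
  rw [spaced, spaced, pow_add, mul_assoc]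

theorem flatten_mem_gapped_pow {Y : List (List Bool)} (hY : ∀ y ∈ Y, y ∈ L.lang) :
    Y.flatten ∈ L.gapped ^ Y.length :=
  Language.mem_pow.mpr ⟨Y, rfl, rfl, fun y hy => L.lang_le_gapped (hY y hy)⟩

theorem mem_spaced_zero (hx : x ∈ L.lang) : x ∈ L.spaced 0 := by
  rw [spaced, pow_zero, one_mul]
  exact Or.inl hx

theorem first_zero_mem_spaced_zero : L.first ++ [false] ∈ L.spaced 0 := by
  rw [spaced, pow_zero, one_mul]
  exact Or.inr rfl

theorem append_mem_spaced (hp : p ∈ L.gapped ^ a * L.lang) (hs : s ∈ L.spaced b)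
    (hn : a + 1 + b = n) : p ++ s ∈ L.spaced n := by
  rw [← hn, spaced_add, pow_succ]
  exact Language.append_mem_mul (mul_le_mul_right L.lang_le_gapped _ hp) hs

theorem append_zero_append_mem_spaced (hp : p ∈ L.gapped ^ a * L.lang) (hs : s ∈ L.spaced b)
    (hn : a + 1 + b = n) : p ++ [false] ++ s ∈ L.spaced n := by
  rw [← hn, spaced_add, pow_succ, gapped, ← mul_assoc, ← gapped]
  exact Language.append_mem_mul (Language.append_mem_mul hp (replicate_mem_zeros le_rfl)) hs

theorem append_mem_gapped_pow_succ_mul (hp : p ∈ L.gapped ^ a * L.lang) (hx : x ∈ L.lang) :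
    p ++ x ∈ L.gapped ^ (a + 1) * L.lang := by
  rw [pow_succ]
  exact Language.append_mem_mul (mul_le_mul_right L.lang_le_gapped _ hp) hx

theorem flatten_append_mem_spaced {Y : List (List Bool)} (hY : ∀ y ∈ Y, y ∈ L.lang)
    (hs : s ∈ L.spaced b) : Y.flatten ++ s ∈ L.spaced (Y.length + b) := by
  rw [spaced_add]
  exact Language.append_mem_mul (flatten_mem_gapped_pow hY) hs

theorem append_flatten_mem {Y : List (List Bool)} (hp : p ∈ L.gapped ^ a * L.lang)
    (hY : ∀ y ∈ Y, y ∈ L.lang) : p ++ Y.flatten ∈ L.gapped ^ (a + Y.length) * L.lang := by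
  induction Y generalizing a p with
  | nil => simpa using hp
  | cons y Y ih =>
    rw [List.forall_mem_cons] at hY
    have hpyY := ih (append_mem_gapped_pow_succ_mul hp hY.1) hY.2
    rwa [List.append_assoc, add_assoc, add_comm 1] at hpyY

theorem joinedWithin_slide_first {T : Set (List Bool)} (hx : x ∈ L.lang)
    (hT : ∀ u ∈ L.lang, p ++ [false] ++ u ++ s ∈ T) (hT' : p ++ L.first ++ [false] ++ s ∈ T) :
    JoinedWithin HammingAdj T (p ++ [false] ++ x ++ s) (p ++ L.first ++ [false] ++ s) := by
  have hlast := hT L.last L.last_mem_lang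
  refine Relation.ReflTransGen.tail (joinedWithin_append_append hx L.last_mem_lang hT)
    ⟨hlast, hT', ?_⟩
  simpa using L.zero_last_adj_first_zero.append_append p s

theorem joinedWithin_slide {T : Set (List Bool)} (hx : x ∈ L.lang)
    (hT : ∀ u ∈ L.lang, p ++ [false] ++ u ++ s ∈ T)
    (hT' : ∀ u ∈ L.lang, p ++ u ++ [false] ++ s ∈ T) :
    JoinedWithin HammingAdj T (p ++ [false] ++ x ++ s) (p ++ x ++ [false] ++ s) := by
  refine (joinedWithin_slide_first hx hT (hT' _ L.first_mem_lang)).trans ?_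
  simpa using joinedWithin_append_append (p := p) (s := [false] ++ s) L.first_mem_lang hx
    fun u hu => by simpa using hT' u hu

/-- The words allowed on the path that forms the next level: the spaced words of `n + 1` blocks
having `q` as a factor. -/
def candidates (L : WordLevel) (n : ℕ) (q : List Bool) : Set (List Bool) :=
  {u | u ∈ L.spaced n ∧ q <:+: u}

theorem joinedWithin_candidates_slide_first (hp : p ∈ L.gapped ^ a * L.lang) (hq : q <:+: p)
    (hx : x ∈ L.lang) (hn : a + 1 = n) :
    JoinedWithin HammingAdj (L.candidates n q)
      (p ++ [false] ++ x) (p ++ L.first ++ [false]) := by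
  have hfactor (m : List Bool) : q <:+: p ++ m := hq.trans (List.prefix_append p m).isInfix
  have hzero (u) (hu : u ∈ L.lang) : p ++ [false] ++ u ∈ L.candidates n q :=
    ⟨append_zero_append_mem_spaced hp (mem_spaced_zero hu) hn, by simpa using hfactor _⟩
  have hfirst : p ++ L.first ++ [false] ∈ L.candidates n q := by
    rw [List.append_assoc]
    exact ⟨append_mem_spaced hp first_zero_mem_spaced_zero hn, hfactor _⟩
  simpa using joinedWithin_slide_first (s := []) hx (by simpa using hzero) (by simpa using hfirst)

theorem joinedWithin_candidates_slide (hp : p ∈ L.gapped ^ a * L.lang) (hs : s ∈ L.spaced b)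
    (hq : q <:+: p ∨ q <:+: s) (hx : x ∈ L.lang)
    (hn : a + b + 2 = n) :
    JoinedWithin HammingAdj (L.candidates n q)
      (p ++ [false] ++ x ++ s) (p ++ x ++ [false] ++ s) := by
  have hfactor (m : List Bool) : q <:+: p ++ m ++ s :=
    hq.elim (fun h => (h.trans (List.prefix_append p m).isInfix).trans
      (List.prefix_append _ s).isInfix) fun h => h.trans (List.suffix_append _ s).isInfix
  refine joinedWithin_slide hx (fun u hu => ⟨?_, ?_⟩) (fun u hu => ⟨?_, ?_⟩)
  · have hus : u ++ s ∈ L.spaced (1 + b) := by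
      simpa using flatten_append_mem_spaced (Y := [u]) (by simpa using hu) hs
    rw [List.append_assoc _ u s]
    exact append_zero_append_mem_spaced hp hus (by lia)
  · simpa using hfactor ([false] ++ u)
  · exact append_zero_append_mem_spaced (append_mem_gapped_pow_succ_mul hp hu) hs (by lia)
  · simpa using hfactor (u ++ [false])

theorem joinedWithin_candidates_slide_flatten {Y : List (List Bool)} (hY : ∀ y ∈ Y, y ∈ L.lang)
    (hp : p ∈ L.gapped ^ a * L.lang) (hs : s ∈ L.spaced b) (hq : q <:+: p ∨ q <:+: s)
    (hn : a + 1 + Y.length + b = n) :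
    JoinedWithin HammingAdj (L.candidates n q)
      (p ++ [false] ++ Y.flatten ++ s) (p ++ Y.flatten ++ [false] ++ s) := by
  induction Y generalizing a p with
  | nil => simpa using JoinedWithin.refl _
  | cons y Y ih =>
    rw [List.forall_mem_cons] at hY
    rw [List.length_cons] at hn
    have hslide := joinedWithin_candidates_slide hp (flatten_append_mem_spaced hY.2 hs)
      (hq.imp_right fun h => h.trans (List.suffix_append Y.flatten s).isInfix) hY.1 (n := n)
      (by lia)
    have hrest := ih hY.2 (append_mem_gapped_pow_succ_mul hp hY.1)
      (hq.imp_left fun h => h.trans (List.prefix_append p y).isInfix) (by lia)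
    simp only [List.flatten_cons, List.append_assoc] at hslide hrest ⊢
    exact hslide.trans hrest

theorem append_zero_flatten_flatten_mem {P : List (List Bool)} (hx : x ∈ L.lang)
    (hP : ∀ y ∈ P, y ∈ L.lang) :
    x ++ [false] ++ P.flatten ++ P.flatten ∈ L.gapped ^ (1 + P.length + P.length) := by
  rw [pow_add, pow_add, pow_one]
  have hx0 : x ++ [false] ∈ L.gapped := Language.append_mem_mul hx (replicate_mem_zeros le_rfl)
  have hPflatten := flatten_mem_gapped_pow hP
  exact Language.append_mem_mul (Language.append_mem_mul hx0 hPflatten) hPflatten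

theorem append_zero_flatten_flatten_first_mem_candidates {P : List (List Bool)} (hx : x ∈ L.lang)
    (hP : ∀ y ∈ P, y ∈ L.lang) :
    x ++ [false] ++ P.flatten ++ P.flatten ++ L.first ∈
      L.candidates (1 + P.length + P.length) P.flatten :=
  ⟨L.spaced_add _ 0 ▸ Language.append_mem_mul (append_zero_flatten_flatten_mem hx hP)
    (mem_spaced_zero L.first_mem_lang), ⟨_, L.first, rfl⟩⟩

theorem joinedWithin_candidates_first_last {P : List (List Bool)} (hP : ∀ y ∈ P, y ∈ L.lang) :
    JoinedWithin HammingAdj (L.candidates (1 + P.length + P.length) P.flatten)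
      (L.first ++ [false] ++ P.flatten ++ P.flatten ++ L.first)
      (L.last ++ P.flatten ++ P.flatten ++ L.first ++ [false]) := by
  have hlast : L.last ∈ L.gapped ^ 0 * L.lang := by simpa using L.last_mem_lang
  have hlastP := append_flatten_mem hlast hP
  have hfirst := mem_spaced_zero L.first_mem_lang
  have hstart := joinedWithin_append_append (p := [])
    (s := [false] ++ P.flatten ++ P.flatten ++ L.first) L.first_mem_lang L.last_mem_lang
    fun u hu => by simpa using append_zero_flatten_flatten_first_mem_candidates hu hP
  have hslide := joinedWithin_candidates_slide_flatten hP hlast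
    (flatten_append_mem_spaced hP hfirst) (Or.inr (List.prefix_append P.flatten _).isInfix)
    (n := 1 + P.length + P.length) (by lia)
  have hslide' := joinedWithin_candidates_slide_flatten hP hlastP hfirst
    (Or.inl (List.suffix_append _ P.flatten).isInfix) (n := 1 + P.length + P.length) (by lia)
  have hend := joinedWithin_candidates_slide_first (append_flatten_mem hlastP hP)
    (List.suffix_append _ P.flatten).isInfix L.first_mem_lang (n := 1 + P.length + P.length)
    (by lia)
  simp only [List.append_assoc, List.nil_append] at hstart hslide hslide' hend ⊢
  exact hstart.trans (hslide.trans (hslide'.trans hend))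

/-- `L'` can serve as the level after `L`: conditions (c) and (d), where (d) is sharpened so that
a trailing zero occurs only after `w_{i,0}`, and `w_{i+1,0}` ends in `w_{i,0}`. -/
structure IsNext (L L' : WordLevel) : Prop where
  factor : ∀ u ∈ L.lang * L.lang, ∀ v ∈ L'.lang, u <:+: v
  spaced : ∃ n, L'.lang ≤ L.spaced n ∧ L'.first ∈ L.gapped ^ n * {L.first}

theorem exists_isNext (L : WordLevel) : ∃ L', L.IsNext L' := by
  obtain ⟨P, hP, hfactor⟩ := exists_flatten_infix_append L.words
  obtain ⟨l, hchain, hlast, hl⟩ := (joinedWithin_candidates_first_last hP).exists_isChain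
    (append_zero_flatten_flatten_first_mem_candidates L.first_mem_lang hP)
  refine ⟨⟨_, l, hchain, ?_⟩, ?_, _, fun v hv => (hl v hv).1, Language.append_mem_mul
    (append_zero_flatten_flatten_mem L.first_mem_lang hP) rfl⟩
  · rw [hlast]
    simpa [last, words] using
      L.wrap.append_append [] (P.flatten ++ P.flatten ++ L.first ++ [false])
  · rintro _ ⟨u, hu, v, hv, rfl⟩ w hw
    exact (hfactor u hu v hv).trans (hl w hw).2

/-- The decomposition of a level over a language `W` in (d) and Property A: the words of the level
are products of words of `W` with gaps of at most `g` zeros, followed by at most one zero, and the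
first word has no trailing zero. The `k + 1` factors from `W` are those of `L_{W,k+1,g}`. -/
def DecomposesOver (L : WordLevel) (W : Language Bool) (g : ℕ) : Prop :=
  ∃ k, L.lang ≤ (W * zeros g) ^ k * W * zeros 1 ∧ L.first ∈ (W * zeros g) ^ k * W

theorem DecomposesOver.exists_LL {W : Language Bool} {g : ℕ} (h : L.DecomposesOver W g) :
    ∃ k, 1 ≤ k ∧ L.lang ≤ lmul (LL W k g) {[], [false]} ∧ L.first ∈ LL W k g := by
  obtain ⟨k, hlang, hfirst⟩ := h
  rw [zeros_one, ← lmul_eq_mul, ← LL_succ] at hlang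
  rw [← LL_succ] at hfirst
  exact ⟨k + 1, k.succ_pos, hlang, hfirst⟩

theorem decomposesOver_lang_self (L : WordLevel) (g : ℕ) : L.DecomposesOver L.lang g := by
  refine ⟨0, ?_, ?_⟩ <;> rw [pow_zero, one_mul]
  exacts [L.lang_le_gapped, L.first_mem_lang]

theorem lang_add_first_zero_le {A : Language Bool} (hlang : L.lang ≤ A * zeros 1)
    (hfirst : L.first ∈ A) : L.lang + {L.first ++ [false]} ≤ A * zeros 1 := by
  rintro _ (hx | rfl)
  · exact hlang hx
  · exact Language.append_mem_mul hfirst (replicate_mem_zeros le_rfl)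

theorem IsNext.decomposesOver_lang {L' : WordLevel} (h : L.IsNext L') :
    L'.DecomposesOver L.lang 1 := by
  obtain ⟨n, hlang, hfirst⟩ := h.spaced
  refine ⟨n, ?_, ?_⟩
  · rw [mul_assoc]
    exact hlang.trans
      (mul_le_mul_right (lang_add_first_zero_le L.lang_le_gapped L.first_mem_lang) _)
  · obtain ⟨u, hu, _, rfl, h⟩ := hfirst
    exact h ▸ Language.append_mem_mul hu L.first_mem_lang

theorem IsNext.decomposesOver {L' : WordLevel} {W : Language Bool} {g : ℕ} (h : L.IsNext L')
    (hg : 2 ≤ g) (hL : L.DecomposesOver W g) : L'.DecomposesOver W g := by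
  obtain ⟨k, hlang, hfirst⟩ := hL
  obtain ⟨n, hlang', hfirst'⟩ := h.spaced
  have hgapped : L.gapped ≤ (W * zeros g) ^ (k + 1) := calc
    L.gapped ≤ (W * zeros g) ^ k * W * zeros 1 * zeros 1 := mul_le_mul_left hlang _
    _ = (W * zeros g) ^ k * W * (zeros 1 * zeros 1) := mul_assoc _ _ _
    _ ≤ (W * zeros g) ^ k * W * zeros g := mul_le_mul_right (zeros_mul_zeros_le hg) _
    _ = (W * zeros g) ^ (k + 1) := by rw [pow_succ, mul_assoc]
  have hgapped_pow : L.gapped ^ n ≤ (W * zeros g) ^ ((k + 1) * n) := by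
    rw [pow_mul]
    exact pow_le_pow_left' hgapped n
  refine ⟨(k + 1) * n + k, ?_, ?_⟩
  · rw [pow_add, mul_assoc, mul_assoc, ← mul_assoc _ W]
    exact hlang'.trans (mul_le_mul' hgapped_pow (lang_add_first_zero_le hlang hfirst))
  · obtain ⟨u, hu, _, rfl, h⟩ := hfirst'
    rw [pow_add, mul_assoc]
    exact h ▸ Language.append_mem_mul (hgapped_pow hu) hfirst

theorem decomposesOver_lang_of_le {L : ℕ → WordLevel} (hL : ∀ i, (L i).IsNext (L (i + 1))) {i m : ℕ}
    (h : i ≤ m) : (L m).DecomposesOver (L i).lang 2 := by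
  induction m, h using Nat.le_induction with
  | base => exact (L i).decomposesOver_lang_self 2
  | succ m _ ih => exact (hL m).decomposesOver le_rfl ih

/-- The number `n_i` of words of the level. -/
def size (L : WordLevel) : ℕ :=
  L.words.length

/-- The word `w_{i,j}` of the level, with the junk value `ε` for `n_i ≤ j`. -/
def word (L : WordLevel) (j : ℕ) : List Bool :=
  L.words.getD j []

theorem word_mem_lang {j : ℕ} (h : j < L.size) : L.word j ∈ L.lang := by
  rw [word, List.getD_eq_getElem _ _ h]
  exact List.getElem_mem h

theorem word_size_sub_one (L : WordLevel) : L.word (L.size - 1) = L.last :=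
  (List.getD_eq_getElem L.words [] (Nat.lt_succ_self _)).trans
    (List.getLast_eq_getElem (List.cons_ne_nil L.first L.tail)).symm

theorem hammingL_word_succ {j : ℕ} (h : j + 2 ≤ L.size) :
    hammingL (L.word j) (L.word (j + 1)) = 1 := by
  rw [word, word, List.getD_eq_getElem _ _ (Nat.lt_of_succ_lt h), List.getD_eq_getElem _ _ h]
  exact (List.isChain_iff_getElem.mp L.isChain j h).2

theorem hammingL_word_zero (L : WordLevel) :
    hammingL (L.word 0 ++ [false]) ([false] ++ L.word (L.size - 1)) = 1 := by
  rw [word_size_sub_one]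
  exact L.wrap.2

theorem Wset_word (L : ℕ → WordLevel) (i : ℕ) :
    Wset (fun i => (L i).size) (fun i j => (L i).word j) i = (L i).lang := by
  ext v
  constructor
  · rintro ⟨j, hj, rfl⟩
    exact word_mem_lang hj
  · intro hv
    obtain ⟨j, hj, rfl⟩ := List.mem_iff_getElem.mp hv
    exact ⟨j, hj, (List.getD_eq_getElem _ _ hj).symm⟩

/-- The initial level `W_0`, consisting of `01` and `11`. -/
def base : WordLevel where
  first := [false, true]
  tail := [[true, true]]
  isChain := by simp [HammingAdj, hammingL]
  wrap := by simp [HammingAdj, hammingL]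

theorem exists_hierarchy : ∃ L : ℕ → WordLevel, L 0 = base ∧ ∀ i, (L i).IsNext (L (i + 1)) := by
  choose next hnext using exists_isNext
  refine ⟨fun i => next^[i] base, rfl, fun i => ?_⟩
  simpa only [Function.iterate_succ_apply'] using hnext _

end WordLevel

theorem exists_word_hierarchy :
    ∃ (nseq ℓseq : ℕ → ℕ) (w : ℕ → ℕ → List Bool),
      nseq 0 = 2 ∧ ℓseq 0 = 2 ∧
      w 0 0 = [false, true] ∧ w 0 1 = [true, true] ∧
      -- `w_{i,j} ∈ {0,1}^{ℓ_i}`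
      (∀ i : ℕ, ∀ j < nseq i, (w i j).length = ℓseq i) ∧
      -- (a) `H(w_{i,j}, w_{i,j+1}) = 1` for `0 ≤ j ≤ n_i − 2`
      (∀ i : ℕ, ∀ j : ℕ, j + 2 ≤ nseq i → hammingL (w i j) (w i (j + 1)) = 1) ∧
      -- (b) `H(w_{i,0} · 0, 0 · w_{i,n_i−1}) = 1`
      (∀ i : ℕ, hammingL (w i 0 ++ [false]) ([false] ++ w i (nseq i - 1)) = 1) ∧
      -- (c) every word of `W_{i−1} · W_{i−1}` is a factor of every word of `W_i`
      (∀ i : ℕ, 1 ≤ i → ∀ u ∈ lmul (Wset nseq w (i - 1)) (Wset nseq w (i - 1)),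
        ∀ v ∈ Wset nseq w i, u <:+: v) ∧
      -- (d) `W_i ⊆ L_{i−1,k,1} · {ε, 0}` and `w_{i,0} ∈ L_{i−1,k,1}` for some `k ≥ 1`
      (∀ i : ℕ, 1 ≤ i → ∃ k : ℕ, 1 ≤ k ∧
        Wset nseq w i ⊆ lmul (LL (Wset nseq w (i - 1)) k 1) {[], [false]} ∧
        w i 0 ∈ LL (Wset nseq w (i - 1)) k 1) ∧
      -- Property A: `W_m ⊆ L_{i,k,2} · {ε, 0}` and `w_{m,0} ∈ L_{i,k,2}` for some `k ≥ 1`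
      (∀ i m : ℕ, i + 1 ≤ m → ∃ k : ℕ, 1 ≤ k ∧
        Wset nseq w m ⊆ lmul (LL (Wset nseq w i) k 2) {[], [false]} ∧
        w m 0 ∈ LL (Wset nseq w i) k 2) := by
  obtain ⟨L, hbase, hnext⟩ := WordLevel.exists_hierarchy
  refine ⟨fun i => (L i).size, fun i => (L i).first.length, fun i j => (L i).word j,
    congrArg WordLevel.size hbase, congrArg (·.first.length) hbase, congrArg (·.word 0) hbase,
    congrArg (·.word 1) hbase,
    fun _ _ hj => WordLevel.length_eq_length_first (WordLevel.word_mem_lang hj),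
    fun _ _ hj => WordLevel.hammingL_word_succ hj, fun i => (L i).hammingL_word_zero, ?_, ?_, ?_⟩
    <;> simp only [WordLevel.Wset_word]
  · intro i hi
    obtain ⟨i, rfl⟩ := Nat.exists_eq_add_of_le' hi
    rw [lmul_eq_mul]
    exact (hnext i).factor
  · intro i hi
    obtain ⟨i, rfl⟩ := Nat.exists_eq_add_of_le' hi
    exact (hnext i).decomposesOver_lang.exists_LL
  · intro i m him
    exact (WordLevel.decomposesOver_lang_of_le hnext (Nat.le_of_succ_le him)).exists_LL
end

section
/- There exists an infinite minimal language-connected subshift X over {0,1} that is uniquely ergodic: there is exactly one σ-invariant Borel probability measure on {0,1}^ℤ whose support is contained in X. -/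
/-!
There exists an infinite minimal language-connected subshift over `{0,1}` that is
uniquely ergodic: there is exactly one shift-invariant Borel probability measure on
`{0,1}^ℤ` whose support is contained in `X` (equivalently, giving zero measure to the
complement of the closed set `X`).
-/

/-- The shift map `σ` on the full shift `{0,1}^ℤ`, `(σ x) n = x (n + 1)`. -/
def shiftMap (x : ℤ → Bool) : ℤ → Bool := fun n => x (n + 1)

/-- A subshift: a nonempty closed shift-invariant subset of the full shift. -/
def IsSubshift (X : Set (ℤ → Bool)) : Prop :=
  X.Nonempty ∧ IsClosed X ∧ shiftMap '' X = X

/-- A subshift is minimal if it contains no nonempty closed shift-invariant proper subset. -/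
def IsMinimalSubshift (X : Set (ℤ → Bool)) : Prop :=
  IsSubshift X ∧ ∀ Y ⊆ X, IsClosed Y → shiftMap '' Y = Y → Y.Nonempty → Y = X

/-- `Lang X n` is the set of words of length `n` occurring in points of `X`. -/
def Lang (X : Set (ℤ → Bool)) (n : ℕ) : Set (Fin n → Bool) :=
  {w | ∃ x ∈ X, ∀ k : Fin n, w k = x ((k : ℕ) : ℤ)}

/-- A set of words `W ⊆ {0,1}^n` is Hamming-connected: any two words of `W` are joined by
a path inside `W` whose consecutive words differ in exactly one position. -/
def HammingConnected {n : ℕ} (W : Set (Fin n → Bool)) : Prop :=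
  ∀ u ∈ W, ∀ v ∈ W,
    Relation.ReflTransGen (fun a b => a ∈ W ∧ b ∈ W ∧ hammingDist a b = 1) u v

/-- A subshift is language-connected if `Lang X n` is Hamming-connected for every `n ≥ 1`. -/
def LanguageConnected (X : Set (ℤ → Bool)) : Prop :=
  ∀ n : ℕ, 1 ≤ n → HammingConnected (Lang X n)

/-!
Code the points of the unit circle under rotation by one radian by the closed half circle visited
at each time, allowing both symbols at the two boundary points `i` and `-i`, and let `X` be the set
of all itineraries. Allowing both symbols makes the itinerary relation closed. Since the rotation is
irrational, distinct points share no itinerary, and an orbit meets `{i, -i}` at most once, so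
the itineraries of one point differ in at most one place. For each `n` the circle is thus
covered by finitely many closed sets, indexed by the words of length `n`, such that words whose sets
meet are equal or adjacent; as the circle is connected, so is the graph of words.

The map sending an itinerary to its point is a factor map onto the rotation. It passes on
minimality, because near each `z` there are points all of whose itineraries agree with a given
itinerary of `z` on a given finite window, and unique ergodicity, because by Poincaré recurrence the
points with two itineraries form a null set for every invariant probability measure.
-/

open Filter Function MeasureTheory Set Topology

theorem rel_of_preconnectedSpace {Z α : Type*} [TopologicalSpace Z] [PreconnectedSpace Z]
    [Finite α] {r : α → α → Prop} [IsTrans α r] {P : Z → α → Prop}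
    (hclosed : ∀ b, IsClosed {z | P z b}) (htotal : ∀ z, ∃ b, P z b)
    (hfiber : ∀ z b c, P z b → P z c → r b c) {z w : Z} {b c : α} (hb : P z b) (hc : P w c) :
    r b c := by
  by_contra hbc
  have hclosed' (s : Set α) : IsClosed {z | ∃ d ∈ s, P z d} := by
    simpa only [← iUnion_ofPred, ← exists_prop] using!
      s.toFinite.isClosed_biUnion fun d _ => hclosed d
  obtain ⟨v, -, ⟨d, hd, hvd⟩, e, he, hve⟩ := isPreconnected_closed_iff.1 isPreconnected_univ
    _ _ (hclosed' {d | r b d}) (hclosed' {d | r b d}ᶜ)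
    (fun v _ => (htotal v).elim fun d hd =>
      (em (r b d)).imp (fun h => ⟨d, h, hd⟩) fun h => ⟨d, h, hd⟩)
    ⟨z, trivial, b, hfiber z b b hb hb, hb⟩ ⟨w, trivial, c, hbc, hc⟩
  exact he (_root_.trans hd (hfiber v d e hvd hve))

theorem hammingDist_le_one_iff {ι : Type*} {β : ι → Type*} [Fintype ι] [∀ i, DecidableEq (β i)]
    {u v : ∀ i, β i} : hammingDist u v ≤ 1 ↔ {i | u i ≠ v i}.Subsingleton := by
  simp [hammingDist, Finset.card_le_one, Set.Subsingleton]

theorem eq_univ_of_isClosed_of_smul_mem_iff {G Z : Type*} [Group G] [MulAction G Z]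
    [TopologicalSpace Z] {a : G} {S : Set Z} (hS : IsClosed S) (hne : S.Nonempty)
    (ha : ∀ z : Z, DenseRange fun n : ℤ => a ^ n • z) (hsmul : ∀ z, a • z ∈ S ↔ z ∈ S) :
    S = univ := by
  obtain ⟨z, hz⟩ := hne
  have horbit (n : ℤ) : a ^ n • z ∈ S := by
    induction n with
    | zero => simpa using hz
    | succ n ih => rwa [add_comm, zpow_one_add, mul_smul, hsmul]
    | pred n ih => rwa [← hsmul, smul_smul, ← zpow_one_add, add_sub_cancel]
  exact eq_univ_of_univ_subset <|
    (ha z).closure_range ▸ closure_minimal (range_subset_iff.2 horbit) hS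

theorem denseRange_zpow_smul {G Z : Type*} [Group G] [TopologicalSpace G] [TopologicalSpace Z]
    [MulAction G Z] [ContinuousSMul G Z] [MulAction.IsPretransitive G Z] {a : G}
    (ha : DenseRange (a ^ · : ℤ → G)) (z : Z) : DenseRange fun n : ℤ => a ^ n • z :=
  (MulAction.surjective_smul G z).denseRange.comp ha (continuous_id.smul continuous_const)

theorem injective_zpow_of_denseRange_zpow {G : Type*} [Group G] [TopologicalSpace G] [T1Space G]
    [Infinite G] {a : G} (ha : DenseRange (a ^ · : ℤ → G)) : Injective (a ^ · : ℤ → G) := by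
  rw [injective_zpow_iff_not_isOfFinOrder]
  intro hfin
  have hrange : (range (a ^ · : ℤ → G)).Finite := finite_zpowers.2 hfin
  exact infinite_univ (ha.closure_range ▸ hrange.isClosed.closure_eq.symm ▸ hrange)

section UniqueErgodicity

/-- Unique ergodicity of `T` on an invariant set `X` of an ambient space: exactly one
`T`-invariant probability measure gives full measure to `X`. -/
def UniquelyErgodicOn {α : Type*} [MeasurableSpace α] (T : α → α) (X : Set α) : Prop :=
  ∃! μ : Measure α, IsProbabilityMeasure μ ∧ MeasurePreserving T μ μ ∧ μ Xᶜ = 0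

variable {α β : Type*} [MeasurableSpace α] [MeasurableSpace β]

theorem measurePreserving_iff_measure_preimage {T : α → α} (hT : Measurable T) {μ : Measure α} :
    MeasurePreserving T μ μ ↔ ∀ A, MeasurableSet A → μ (T ⁻¹' A) = μ A := by
  refine ⟨fun h A hA => h.measure_preimage hA.nullMeasurableSet, fun h => ⟨hT, ?_⟩⟩
  ext A hA
  rw [Measure.map_apply hT hA, h A hA]

theorem measurePreserving_map_of_ae_semiconj {S : α → α} {T : β → β} {π : α → β} {μ : Measure α}
    (hS : MeasurePreserving S μ μ) (hT : Measurable T) (hπ : AEMeasurable π μ)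
    (hsemi : ∀ᵐ x ∂μ, π (S x) = T (π x)) :
    MeasurePreserving T (μ.map π) (μ.map π) where
  measurable := hT
  map_eq := by
    have hπS : AEMeasurable π (μ.map S) := by rwa [hS.map_eq]
    calc (μ.map π).map T = μ.map (T ∘ π) := AEMeasurable.map_map_of_aemeasurable hT.aemeasurable hπ
      _ = μ.map (π ∘ S) := Measure.map_congr (hsemi.mono fun _ => Eq.symm)
      _ = (μ.map S).map π := (AEMeasurable.map_map_of_aemeasurable hπS hS.aemeasurable).symm
      _ = μ.map π := by rw [hS.map_eq]

theorem UniquelyErgodicOn.of_almost_injective_factor {S : α → α} {T : β → β} {X : Set α}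
    {π : α → β} {c : β → α} {N : Set β} (hT : UniquelyErgodicOn T univ) (hS : Measurable S)
    (hX : MeasurableSet X) (hπ : Measurable (X.domRestrict π)) (hc : Measurable c)
    (hcX : ∀ z, c z ∈ X) (hcT : Semiconj c T S) (hπS : ∀ x ∈ X, π (S x) = T (π x))
    (hN : ∀ ν : Measure β, IsProbabilityMeasure ν → MeasurePreserving T ν ν → ν N = 0)
    (hcπ : ∀ x ∈ X, π x ∉ N → c (π x) = x) :
    UniquelyErgodicOn S X := by
  obtain ⟨ν, ⟨hν, hνT, -⟩, hν_unique⟩ := hT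
  refine ⟨ν.map c, ⟨Measure.isProbabilityMeasure_map hc.aemeasurable,
    measurePreserving_map_of_ae_semiconj hνT hS hc.aemeasurable (.of_forall hcT), ?_⟩, ?_⟩
  · rw [Measure.map_apply hc hX.compl, preimage_compl, preimage_eq_univ_iff.2, compl_univ,
      measure_empty]
    exact range_subset_iff.2 hcX
  rintro μ ⟨hμ, hμS, hμX⟩
  have hmem : ∀ᵐ x ∂μ, x ∈ X := mem_ae_iff.2 hμX
  have hπμ : AEMeasurable π μ := by
    have := aemeasurable_restrict_of_measurable_subtype (μ := μ) hX hπ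
    rwa [Measure.restrict_eq_self_of_ae_mem hmem] at this
  have hprob : IsProbabilityMeasure (μ.map π) := Measure.isProbabilityMeasure_map hπμ
  have hinv : MeasurePreserving T (μ.map π) (μ.map π) :=
    measurePreserving_map_of_ae_semiconj hμS hνT.measurable hπμ (hmem.mono hπS)
  have hnull : ∀ᵐ x ∂μ, π x ∉ N :=
    ae_of_ae_map hπμ (measure_eq_zero_iff_ae_notMem.1 (hN _ hprob hinv))
  calc μ = μ.map (c ∘ π) := by
        conv_lhs => rw [← Measure.map_id (μ := μ)]
        refine Measure.map_congr ?_
        filter_upwards [hmem, hnull] with x hxX hxN using (hcπ x hxX hxN).symm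
    _ = (μ.map π).map c := (AEMeasurable.map_map_of_aemeasurable hc.aemeasurable hπμ).symm
    _ = ν.map c := by rw [hν_unique _ ⟨hprob, hinv, by simp⟩]

theorem isClosed_setOf_measurePreserving_smul {M X : Type*} [TopologicalSpace M]
    [FirstCountableTopology M] [TopologicalSpace X] [HasOuterApproxClosed X] [MeasurableSpace X]
    [BorelSpace X] [SMul M X] [ContinuousSMul M X] (ν : Measure X) [IsFiniteMeasure ν] :
    IsClosed {g : M | MeasurePreserving (g • · : X → X) ν ν} := by
  have hsmul (g : M) : Continuous (g • · : X → X) := continuous_const_smul g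
  have hiff (g : M) : MeasurePreserving (g • · : X → X) ν ν ↔
      ∀ φ : BoundedContinuousFunction X ℝ, ∫ x, φ (g • x) ∂ν = ∫ x, φ x ∂ν := by
    have hmap (φ : BoundedContinuousFunction X ℝ) :
        ∫ x, φ x ∂ν.map (g • ·) = ∫ x, φ (g • x) ∂ν :=
      integral_map (hsmul g).aemeasurable φ.continuous.aestronglyMeasurable
    refine ⟨fun h φ => by rw [← hmap, h.map_eq], fun h => ⟨(hsmul g).measurable, ?_⟩⟩
    exact ext_of_forall_integral_eq_of_IsFiniteMeasure fun φ => (hmap φ).trans (h φ)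
  simp only [hiff, ofPred_forall]
  refine isClosed_iInter fun φ => isClosed_eq ?_ continuous_const
  exact continuous_of_dominated
    (fun g => (φ.continuous.comp (hsmul g)).aestronglyMeasurable)
    (fun g => .of_forall fun x => φ.norm_coe_le_norm (g • x)) (integrable_const ‖φ‖)
    (.of_forall fun x => φ.continuous.comp (continuous_id.smul continuous_const))

theorem isMulLeftInvariant_of_denseRange_pow {M : Type*} [Monoid M] [TopologicalSpace M]
    [ContinuousMul M] [FirstCountableTopology M] [HasOuterApproxClosed M] [MeasurableSpace M]
    [BorelSpace M] {a : M} (ha : DenseRange (a ^ · : ℕ → M)) {ν : Measure M} [IsFiniteMeasure ν]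
    (hν : MeasurePreserving (a • · : M → M) ν ν) : ν.IsMulLeftInvariant where
  map_mul_left_eq_self g := by
    have hpow (n : ℕ) : MeasurePreserving (a ^ n • · : M → M) ν ν :=
      smul_iterate (α := M) a n ▸ hν.iterate n
    have hclosure := closure_minimal (range_subset_iff.2 hpow)
      (isClosed_setOf_measurePreserving_smul (M := M) ν)
    exact (hclosure (ha g)).map_eq

theorem uniquelyErgodicOn_smul_of_denseRange_zpow {G : Type*} [Group G] [TopologicalSpace G]
    [IsTopologicalGroup G] [CompactSpace G] [FirstCountableTopology G] [HasOuterApproxClosed G]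
    [MeasurableSpace G] [BorelSpace G] {a : G} (ha : DenseRange (a ^ · : ℤ → G)) :
    UniquelyErgodicOn (a • · : G → G) univ := by
  refine ⟨Measure.haarMeasure ⊤, ⟨⟨Measure.haarMeasure_self⟩, measurePreserving_mul_left _ a,
    by simp⟩, ?_⟩
  rintro ν ⟨hν, hinv, -⟩
  have hleft := isMulLeftInvariant_of_denseRange_pow (denseRange_zpow_iff_pow.1 ha) hinv
  have hhaar : ν.IsHaarMeasure := Measure.isHaarMeasure_of_isCompact_nonempty_interior ν univ
    isCompact_univ (by simp) (by simp) (by simp)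
  have hprob : IsProbabilityMeasure (Measure.haarMeasure (G := G) ⊤) := ⟨Measure.haarMeasure_self⟩
  exact Measure.isHaarMeasure_eq_of_isProbabilityMeasure _ _

end UniqueErgodicity

theorem shiftMap_bijective : Bijective shiftMap :=
  ((Equiv.addRight (1 : ℤ)).arrowCongr (Equiv.refl Bool)).symm.bijective

theorem measurable_shiftMap : Measurable shiftMap :=
  measurable_pi_lambda _ fun n => measurable_pi_apply (n + 1)

section Itineraries

/-- The sign `1` or `-1` that a symbol of the alphabet `{0,1}` stands for. -/
def boolSign (b : Bool) : ℝ := bif b then 1 else -1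

theorem boolSign_mul_self (b : Bool) : boolSign b * boolSign b = 1 := by
  cases b <;> simp [boolSign]

theorem boolSign_ne_zero (b : Bool) : boolSign b ≠ 0 :=
  left_ne_zero_of_mul_eq_one (boolSign_mul_self b)

theorem boolSign_decide_mul_nonneg (r : ℝ) : 0 ≤ boolSign (decide (0 ≤ r)) * r := by
  rcases le_or_gt 0 r with hr | hr
  · simp [boolSign, hr]
  · simpa [boolSign, hr.not_ge] using hr.le

theorem eq_of_boolSign_mul_nonneg {b c : Bool} {r : ℝ} (hr : r ≠ 0) (hb : 0 ≤ boolSign b * r)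
    (hc : 0 ≤ boolSign c * r) : b = c := by
  by_contra hbc
  have hneg : boolSign c = -boolSign b := by
    cases b <;> cases c <;> simp_all [boolSign]
  rw [hneg, neg_mul] at hc
  exact mul_ne_zero (boolSign_ne_zero b) hr (by linarith)

variable {G Z : Type*} [Group G] [MulAction G Z]

/-- `x` is an itinerary of `z` if it records the sign of `f` along the orbit `n ↦ a ^ n • z`.
Either symbol is allowed where `f` vanishes, which makes the relation closed in `(z, x)`. -/
def IsItinerary (a : G) (f : Z → ℝ) (z : Z) (x : ℤ → Bool) : Prop :=
  ∀ n : ℤ, 0 ≤ boolSign (x n) * f (a ^ n • z)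

/-- The subshift of all itineraries of points of `Z`. -/
def itineraryShift (a : G) (f : Z → ℝ) : Set (ℤ → Bool) :=
  {x | ∃ z, IsItinerary a f z x}

/-- The itinerary of `z` that reads `1` wherever `f` vanishes. -/
noncomputable def itinerary (a : G) (f : Z → ℝ) (z : Z) : ℤ → Bool :=
  fun n => decide (0 ≤ f (a ^ n • z))

/-- Every orbit meets the zero set of `f` at most once, so that a point has at most two
itineraries. -/
def OrbitZerosSubsingleton (a : G) (f : Z → ℝ) : Prop :=
  ∀ z, {n : ℤ | f (a ^ n • z) = 0}.Subsingleton

/-- Distinct points have orbits along which `f` takes strictly opposite signs at some time, so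
that they share no itinerary. -/
def OrbitSignsSeparate (a : G) (f : Z → ℝ) : Prop :=
  ∀ z w, (∀ n : ℤ, 0 ≤ f (a ^ n • z) * f (a ^ n • w)) → z = w

/-- Every point at which `f` has a sign in the wide sense is a limit of points at which it has that
sign strictly, so that zeros of `f` can be perturbed to either symbol. -/
def SignsApproximable [TopologicalSpace Z] (f : Z → ℝ) : Prop :=
  ∀ b z, 0 ≤ boolSign b * f z → z ∈ closure {w | 0 < boolSign b * f w}

variable {a : G} {f : Z → ℝ} {z w : Z} {x y : ℤ → Bool}

theorem isItinerary_itinerary (a : G) (f : Z → ℝ) (z : Z) :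
    IsItinerary a f z (itinerary a f z) :=
  fun _ => boolSign_decide_mul_nonneg _

theorem itinerary_mem_itineraryShift (a : G) (f : Z → ℝ) (z : Z) :
    itinerary a f z ∈ itineraryShift a f :=
  ⟨z, isItinerary_itinerary a f z⟩

theorem semiconj_itinerary (a : G) (f : Z → ℝ) : Semiconj (itinerary a f) (a • ·) shiftMap := by
  intro z
  funext n
  simp [itinerary, shiftMap, zpow_add_one, mul_smul]

theorem isItinerary_smul_shiftMap :
    IsItinerary a f (a • z) (shiftMap x) ↔ IsItinerary a f z x := by
  refine (Equiv.addRight (1 : ℤ)).forall_congr fun n => ?_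
  simp [shiftMap, zpow_add_one, mul_smul]

theorem shiftMap_mem_itineraryShift_iff :
    shiftMap x ∈ itineraryShift a f ↔ x ∈ itineraryShift a f := by
  refine (MulAction.surjective a).exists.trans (exists_congr fun z => ?_)
  exact isItinerary_smul_shiftMap

theorem IsItinerary.eq_of_separate (hsep : OrbitSignsSeparate a f) (hz : IsItinerary a f z x)
    (hw : IsItinerary a f w x) : z = w := by
  refine hsep z w fun n => ?_
  calc 0 ≤ (boolSign (x n) * f (a ^ n • z)) * (boolSign (x n) * f (a ^ n • w)) :=
        mul_nonneg (hz n) (hw n)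
    _ = f (a ^ n • z) * f (a ^ n • w) := by
        rw [mul_mul_mul_comm, boolSign_mul_self, one_mul]

theorem IsItinerary.apply_eq_of_ne_zero (hx : IsItinerary a f z x) (hy : IsItinerary a f z y)
    {n : ℤ} (hn : f (a ^ n • z) ≠ 0) : x n = y n :=
  eq_of_boolSign_mul_nonneg hn (hx n) (hy n)

theorem IsItinerary.subsingleton_setOf_ne (hzero : OrbitZerosSubsingleton a f)
    (hx : IsItinerary a f z x) (hy : IsItinerary a f z y) : {n | x n ≠ y n}.Subsingleton :=
  (hzero z).anti fun _ hn => of_not_not fun h => hn (hx.apply_eq_of_ne_zero hy h)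

/-- The point with itinerary `x`; a junk value when `x` is not an itinerary. -/
noncomputable def itineraryPoint [Nonempty Z] (a : G) (f : Z → ℝ) (x : ℤ → Bool) : Z :=
  Classical.epsilon fun z => IsItinerary a f z x

theorem isItinerary_itineraryPoint [Nonempty Z] (hx : x ∈ itineraryShift a f) :
    IsItinerary a f (itineraryPoint a f x) x :=
  Classical.epsilon_spec hx

theorem infinite_itineraryShift [Infinite Z] (hsep : OrbitSignsSeparate a f) :
    (itineraryShift a f).Infinite := by
  have hinj : Injective (itinerary a f) := fun z w h =>
    (isItinerary_itinerary a f z).eq_of_separate hsep (h ▸ isItinerary_itinerary a f w)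
  exact (infinite_range_of_injective hinj).mono
    (range_subset_iff.2 (itinerary_mem_itineraryShift a f))

variable [TopologicalSpace Z] [ContinuousConstSMul G Z]

theorem continuous_boolSign_mul (hf : Continuous f) (n : ℤ) :
    Continuous fun p : Z × (ℤ → Bool) => boolSign (p.2 n) * f (a ^ n • p.1) := by
  have hsign : Continuous boolSign := continuous_of_discreteTopology
  fun_prop

theorem isClosed_setOf_isItinerary (hf : Continuous f) :
    IsClosed {p : Z × (ℤ → Bool) | IsItinerary a f p.1 p.2} := by
  simp only [IsItinerary, ofPred_forall]
  exact isClosed_iInter fun n => isClosed_le continuous_const (continuous_boolSign_mul hf n)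

theorem isClosed_setOf_exists_mem_isItinerary_left [CompactSpace Z] (hf : Continuous f)
    {C : Set Z} (hC : IsClosed C) : IsClosed {x | ∃ z ∈ C, IsItinerary a f z x} := by
  convert isClosedMap_snd_of_compactSpace _
    ((hC.preimage continuous_fst).inter (isClosed_setOf_isItinerary (a := a) hf)) using 1
  ext; simp

theorem isClosed_setOf_exists_mem_isItinerary_right (hf : Continuous f)
    {C : Set (ℤ → Bool)} (hC : IsClosed C) : IsClosed {z | ∃ x ∈ C, IsItinerary a f z x} := by
  convert isClosedMap_fst_of_compactSpace _
    ((hC.preimage continuous_snd).inter (isClosed_setOf_isItinerary (a := a) hf)) using 1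
  ext; simp

theorem isClosed_itineraryShift [CompactSpace Z] (hf : Continuous f) :
    IsClosed (itineraryShift a f) := by
  simpa [itineraryShift] using
    isClosed_setOf_exists_mem_isItinerary_left (a := a) hf isClosed_univ

theorem isSubshift_itineraryShift [CompactSpace Z] [Nonempty Z] (hf : Continuous f) :
    IsSubshift (itineraryShift a f) := by
  refine ⟨?_, isClosed_itineraryShift hf, ?_⟩
  · exact (range_nonempty (itinerary a f)).mono
      (range_subset_iff.2 (itinerary_mem_itineraryShift a f))
  · have hpre : shiftMap ⁻¹' itineraryShift a f = itineraryShift a f :=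
      ext fun _ => shiftMap_mem_itineraryShift_iff
    conv_lhs => rw [← hpre, image_preimage_eq _ shiftMap_bijective.surjective]

theorem languageConnected_itineraryShift [CompactSpace Z] [PreconnectedSpace Z]
    (hf : Continuous f) (hzero : OrbitZerosSubsingleton a f) :
    LanguageConnected (itineraryShift a f) := by
  rintro n - u ⟨x, ⟨z, hzx⟩, hu⟩ v ⟨y, ⟨w, hwy⟩, hv⟩
  let ReadsWord (z : Z) (u : Fin n → Bool) : Prop :=
    ∃ x ∈ {x : ℤ → Bool | ∀ k : Fin n, u k = x (k : ℕ)}, IsItinerary a f z x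
  have hclosed (u : Fin n → Bool) : IsClosed {z | ReadsWord z u} := by
    refine isClosed_setOf_exists_mem_isItinerary_right hf ?_
    simp only [ofPred_forall]
    exact isClosed_iInter fun k => isClosed_eq continuous_const (continuous_apply _)
  have htotal (z : Z) : ∃ u, ReadsWord z u :=
    ⟨_, itinerary a f z, fun _ => rfl, isItinerary_itinerary a f z⟩
  refine rel_of_preconnectedSpace hclosed htotal ?_ ⟨x, hu, hzx⟩ ⟨y, hv, hwy⟩
  rintro z u v ⟨x, hu, hx⟩ ⟨y, hv, hy⟩
  have hdist : hammingDist u v ≤ 1 := by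
    refine hammingDist_le_one_iff.2 fun i hi j hj => ?_
    simp only [mem_ofPred_eq, hu _, hv _] at hi hj
    exact Fin.ext (Nat.cast_injective (hx.subsingleton_setOf_ne hzero hy hi hj))
  rcases hdist.lt_or_eq with hlt | heq
  · rw [hammingDist_lt_one.1 hlt]
  · exact .single ⟨⟨x, ⟨z, hx⟩, hu⟩, ⟨y, ⟨z, hy⟩, hv⟩, heq⟩

theorem IsItinerary.exists_forall_mem_pos (hf : Continuous f)
    (hzero : OrbitZerosSubsingleton a f) (hsign : SignsApproximable f)
    (hx : IsItinerary a f z x) (F : Finset ℤ) :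
    ∃ w, ∀ n ∈ F, 0 < boolSign (x n) * f (a ^ n • w) := by
  have hcont (n : ℤ) : Continuous fun w => boolSign (x n) * f (a ^ n • w) :=
    continuous_const.mul (hf.comp (continuous_const_smul _))
  obtain ⟨k, hk⟩ : ∃ k : ℤ, ∀ n ≠ k, f (a ^ n • z) ≠ 0 := by
    by_cases h : ∃ k : ℤ, f (a ^ k • z) = 0
    · exact h.imp fun k hk n hne hn => hne (hzero z hn hk)
    · exact ⟨0, fun n _ hn => h ⟨n, hn⟩⟩
  have haway : ∀ᶠ w in 𝓝 z, ∀ n ∈ F.erase k, 0 < boolSign (x n) * f (a ^ n • w) := by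
    refine (Filter.eventually_all_finset _).2 fun n hn => ?_
    exact (hcont n).continuousAt.eventually_const_lt <|
      (hx n).lt_of_ne' (mul_ne_zero (boolSign_ne_zero _) (hk n (Finset.ne_of_mem_erase hn)))
  have hat : ∃ᶠ w in 𝓝 z, 0 < boolSign (x k) * f (a ^ k • w) := by
    have hfreq := mem_closure_iff_frequently.1 (hsign (x k) _ (hx k))
    rwa [← Homeomorph.smul_apply, ← (Homeomorph.smul (a ^ k)).map_nhds_eq z,
      frequently_map] at hfreq
  obtain ⟨w, hwk, hw⟩ := (hat.and_eventually haway).exists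
  refine ⟨w, fun n hn => ?_⟩
  obtain rfl | hne := eq_or_ne n k
  exacts [hwk, hw n (Finset.mem_erase.2 ⟨hne, hn⟩)]

theorem exists_mem_isItinerary_of_invariant {Y : Set (ℤ → Bool)} (hf : Continuous f)
    (ha : ∀ z : Z, DenseRange fun n : ℤ => a ^ n • z) (hYX : Y ⊆ itineraryShift a f)
    (hY : IsClosed Y) (hinv : shiftMap '' Y = Y) (hne : Y.Nonempty) (z : Z) :
    ∃ x ∈ Y, IsItinerary a f z x := by
  have hshift (x : ℤ → Bool) : shiftMap x ∈ Y ↔ x ∈ Y := by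
    conv_lhs => rw [← hinv, shiftMap_bijective.injective.mem_set_image]
  refine eq_univ_iff_forall.1 (eq_univ_of_isClosed_of_smul_mem_iff
    (isClosed_setOf_exists_mem_isItinerary_right hf hY) ?_ ha fun z => ?_) z
  · obtain ⟨y, hy⟩ := hne
    exact (hYX hy).imp fun w hw => ⟨y, hy, hw⟩
  · simp only [mem_ofPred_eq]
    rw [shiftMap_bijective.surjective.exists]
    simp only [hshift, isItinerary_smul_shiftMap]

theorem isMinimalSubshift_itineraryShift [CompactSpace Z] [Nonempty Z] (hf : Continuous f)
    (ha : ∀ z : Z, DenseRange fun n : ℤ => a ^ n • z) (hzero : OrbitZerosSubsingleton a f)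
    (hsign : SignsApproximable f) :
    IsMinimalSubshift (itineraryShift a f) := by
  refine ⟨isSubshift_itineraryShift hf, fun Y hYX hY hinv hne => hYX.antisymm ?_⟩
  rintro x ⟨z, hx⟩
  rw [← hY.closure_eq, mem_closure_iff]
  intro U hU hxU
  obtain ⟨F, V, hV, hVU⟩ := isOpen_pi_iff.1 hU x hxU
  obtain ⟨w, hw⟩ := hx.exists_forall_mem_pos hf hzero hsign F
  obtain ⟨y, hyY, hy⟩ := exists_mem_isItinerary_of_invariant hf ha hYX hY hinv hne w
  refine ⟨y, hVU fun n hn => ?_, hyY⟩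
  have hxy : x n = y n :=
    eq_of_boolSign_mul_nonneg (right_ne_zero_of_mul (hw n hn).ne') (hw n hn).le (hy n)
  exact hxy ▸ (hV n hn).2

theorem continuousOn_itineraryPoint [CompactSpace Z] [Nonempty Z] (hf : Continuous f)
    (hsep : OrbitSignsSeparate a f) :
    ContinuousOn (itineraryPoint a f) (itineraryShift a f) := by
  refine continuousOn_iff_isClosed.2 fun C hC =>
    ⟨_, isClosed_setOf_exists_mem_isItinerary_left (a := a) hf hC, ?_⟩
  ext x
  refine and_congr_left fun hx => ⟨fun h => ⟨_, h, isItinerary_itineraryPoint hx⟩, ?_⟩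
  rintro ⟨z, hz, hzx⟩
  rwa [mem_preimage, ← hzx.eq_of_separate hsep (isItinerary_itineraryPoint hx)]

variable [MeasurableSpace Z] [BorelSpace Z]

theorem measurable_itinerary (hf : Continuous f) : Measurable (itinerary a f) := by
  refine measurable_pi_lambda _ fun n => measurable_to_bool ?_
  have hclosed : IsClosed {z | 0 ≤ f (a ^ n • z)} :=
    isClosed_le continuous_const (hf.comp (continuous_const_smul _))
  convert hclosed.measurableSet using 1
  ext; simp [itinerary]

theorem measure_setOf_exists_zero_eq_zero {ν : Measure Z} [IsFiniteMeasure ν]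
    (hf : Continuous f) (hzero : OrbitZerosSubsingleton a f)
    (hν : MeasurePreserving (a • · : Z → Z) ν ν) : ν {z | ∃ n : ℤ, f (a ^ n • z) = 0} = 0 := by
  rw [ofPred_exists, measure_iUnion_null_iff]
  intro n
  by_contra hpos
  have hclosed : IsClosed {z | f (a ^ n • z) = 0} :=
    isClosed_eq (hf.comp (continuous_const_smul _)) continuous_const
  obtain ⟨z, hz, m, hm, hmz⟩ :=
    hν.exists_mem_iterate_mem hclosed.measurableSet.nullMeasurableSet hpos
  rw [smul_iterate, mem_ofPred_eq, smul_smul, ← zpow_natCast, ← zpow_add] at hmz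
  have := hzero z hz hmz
  omega

theorem uniquelyErgodicOn_itineraryShift [CompactSpace Z] [Nonempty Z] (hf : Continuous f)
    (hzero : OrbitZerosSubsingleton a f) (hsep : OrbitSignsSeparate a f)
    (ha : UniquelyErgodicOn (a • · : Z → Z) univ) :
    UniquelyErgodicOn shiftMap (itineraryShift a f) := by
  refine ha.of_almost_injective_factor (π := itineraryPoint a f) (c := itinerary a f)
    (N := {z | ∃ n : ℤ, f (a ^ n • z) = 0}) measurable_shiftMap
    (isClosed_itineraryShift hf).measurableSet
    (continuousOn_itineraryPoint hf hsep).domRestrict.measurable (measurable_itinerary hf)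
    (itinerary_mem_itineraryShift a f) (semiconj_itinerary a f) ?_
    (fun ν _ hν => measure_setOf_exists_zero_eq_zero hf hzero hν) ?_
  · intro x hx
    have hshift := isItinerary_itineraryPoint (shiftMap_mem_itineraryShift_iff.2 hx)
    exact hshift.eq_of_separate hsep (isItinerary_smul_shiftMap.2 (isItinerary_itineraryPoint hx))
  · intro x hx hnonzero
    funext n
    exact (isItinerary_itinerary a f _).apply_eq_of_ne_zero (isItinerary_itineraryPoint hx)
      fun hn => hnonzero ⟨n, hn⟩

end Itineraries

section Circle

instance infinite_circle : Infinite Circle :=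
  have : Nontrivial Circle := ⟨1, -1, by simp [Circle.ext_iff, self_eq_neg]⟩
  PreconnectedSpace.infinite

theorem denseRange_circleExp_zpow {t : ℝ} (ht : Irrational (t / (2 * Real.pi))) :
    DenseRange (Circle.exp t ^ · : ℤ → Circle) := by
  convert AddCircle.homeomorphCircle'.surjective.denseRange.comp
    (AddCircle.denseRange_zsmul_coe_iff.2 ht) AddCircle.homeomorphCircle'.continuous using 2 with n
  rw [comp_apply, ← AddCircle.coe_zsmul, AddCircle.homeomorphCircle'_apply_mk, Circle.exp_zsmul]

theorem denseRange_circleExp_one_zpow : DenseRange (Circle.exp 1 ^ · : ℤ → Circle) := by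
  refine denseRange_circleExp_zpow ?_
  simpa using (irrational_pi.natCast_mul two_ne_zero).inv

/-- The first coordinate on the unit circle, whose sign cuts the circle into the two half circles
that serve as symbols. -/
def circleRe (z : Circle) : ℝ := (z : ℂ).re

theorem continuous_circleRe : Continuous circleRe :=
  Complex.continuous_re.comp continuous_subtype_val

theorem circleRe_exp (t : ℝ) : circleRe (Circle.exp t) = Real.cos t := by
  rw [circleRe, Circle.coe_exp, Complex.exp_ofReal_mul_I_re]

theorem circleRe_eq_neg_of_mul_eq_neg_one {u v : Circle} (h : u * v = -1) :
    circleRe v = -circleRe u := by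
  rw [eq_inv_mul_of_mul_eq h]
  simp [circleRe]

theorem sq_eq_neg_one_of_circleRe_eq_zero {u : Circle} (hu : circleRe u = 0) : u ^ 2 = -1 := by
  have hu : (u : ℂ).re = 0 := hu
  have hnorm : (u : ℂ).im * (u : ℂ).im = 1 := by
    simpa [Complex.normSq_apply, hu] using Circle.normSq_coe u
  ext1
  apply Complex.ext <;> simp [pow_two, hu, hnorm]

theorem eq_of_forall_circleRe_mul_nonneg {z w : Circle}
    (h : ∀ g : Circle, 0 ≤ circleRe (g * z) * circleRe (g * w)) : z = w := by
  -- Rotate so that `z` and `w` become mirror images in the imaginary axis.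
  obtain ⟨t, ht⟩ := Circle.exp_surjective (-(z * w)⁻¹)
  set g := Circle.exp (t / 2)
  have hprod : (g * z) * (g * w) = -1 := by
    rw [mul_mul_mul_comm, ← Circle.exp_add, add_halves, ht, neg_mul, inv_mul_cancel]
  have hzero : circleRe (g * z) = 0 := by
    have hneg := h g
    rw [circleRe_eq_neg_of_mul_eq_neg_one hprod] at hneg
    nlinarith
  have hsq := sq_eq_neg_one_of_circleRe_eq_zero hzero
  rw [← hprod, pow_two] at hsq
  exact mul_left_cancel (mul_left_cancel hsq)

theorem orbitZerosSubsingleton_circleRe {a : Circle} (ha : DenseRange (a ^ · : ℤ → Circle)) :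
    OrbitZerosSubsingleton a circleRe := by
  intro z n hn m hm
  have hsq : (a ^ n * z) ^ 2 = (a ^ m * z) ^ 2 :=
    (sq_eq_neg_one_of_circleRe_eq_zero hn).trans (sq_eq_neg_one_of_circleRe_eq_zero hm).symm
  rw [mul_pow, mul_pow, mul_left_inj, ← zpow_natCast, ← zpow_natCast, ← zpow_mul, ← zpow_mul] at hsq
  exact mul_right_cancel₀ two_ne_zero (injective_zpow_of_denseRange_zpow ha hsq)

theorem orbitSignsSeparate_circleRe {a : Circle} (ha : DenseRange (a ^ · : ℤ → Circle)) :
    OrbitSignsSeparate a circleRe := by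
  refine fun z w h => eq_of_forall_circleRe_mul_nonneg fun g => ?_
  refine ha.induction_on g ?_ h
  have := continuous_circleRe
  exact isClosed_le continuous_const (by fun_prop)

theorem mem_closure_of_mul_circleRe_nonneg {s : ℝ} (hs : s ≠ 0) {u : Circle}
    (hu : 0 ≤ s * circleRe u) : u ∈ closure {v | 0 < s * circleRe v} := by
  rcases hu.lt_or_eq with hpos | hzero
  · exact subset_closure hpos
  obtain ⟨t, rfl⟩ := Circle.exp_surjective u
  have hcos : Real.cos t = 0 := by
    simpa [hs, circleRe_exp] using hzero.symm
  by_contra hnot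
  have hnear : ∀ᶠ v in 𝓝 (Circle.exp t), ¬ 0 < s * circleRe v := by
    rwa [mem_closure_iff_frequently, not_frequently] at hnot
  have hmax : IsLocalMax (fun r => s * Real.cos r) t := by
    filter_upwards [Circle.exp.continuous.continuousAt.eventually hnear] with r hr
    simpa [hcos, circleRe_exp] using hr
  have hsin : Real.sin t = 0 := by
    simpa [hs] using hmax.hasDerivAt_eq_zero ((Real.hasDerivAt_cos t).const_mul s)
  simpa [hcos, hsin] using Real.sin_sq_add_cos_sq t

theorem signsApproximable_circleRe : SignsApproximable circleRe :=
  fun b _ => mem_closure_of_mul_circleRe_nonneg (boolSign_ne_zero b)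

end Circle

theorem exists_minimal_language_connected_uniquely_ergodic :
    ∃ X : Set (ℤ → Bool), IsMinimalSubshift X ∧ X.Infinite ∧ LanguageConnected X ∧
      ∃! μ : MeasureTheory.Measure (ℤ → Bool),
        MeasureTheory.IsProbabilityMeasure μ ∧
        (∀ A : Set (ℤ → Bool), MeasurableSet A → μ (shiftMap ⁻¹' A) = μ A) ∧
        μ Xᶜ = 0 := by
  have hdense := denseRange_circleExp_one_zpow
  have hzero := orbitZerosSubsingleton_circleRe hdense
  have hsep := orbitSignsSeparate_circleRe hdense
  borelize Circle
  have herg : UniquelyErgodicOn shiftMap (itineraryShift (Circle.exp 1) circleRe) :=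
    uniquelyErgodicOn_itineraryShift continuous_circleRe hzero hsep
      (uniquelyErgodicOn_smul_of_denseRange_zpow hdense)
  exact ⟨itineraryShift (Circle.exp 1) circleRe,
    isMinimalSubshift_itineraryShift continuous_circleRe (denseRange_zpow_smul hdense) hzero
      signsApproximable_circleRe,
    infinite_itineraryShift hsep,
    languageConnected_itineraryShift continuous_circleRe hzero,
    by simpa only [UniquelyErgodicOn, measurePreserving_iff_measure_preimage measurable_shiftMap]
      using herg⟩
end

section
/- There exists an infinite minimal language-connected subshift X over {0,1} such that the topological entropy of the shift map σ restricted to X is strictly positive. -/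
/-!
Read a sequence `y : ℤ → Bool` along lines of irrational slope `α`: take the points
`j ↦ y ⌊s + j * α⌋` for `s : ℝ`. As `s` varies, irrationality makes the floors `⌊s + j * α⌋` jump
one at a time, so words change by at most one letter at a time. If `y` is Toeplitz, finitely many
of its entries have a common period `p`, and the rotation by `α` on `ℝ / pℤ` is minimal, so every
word recurs with bounded gaps. If `0 < α ≤ 1`, the reading visits every entry of `y` and hence has
positive entropy as soon as `y` does. A Toeplitz sequence of positive entropy is obtained by filling
positions periodically in stages: stage `k` writes every pattern of length `period k` into the holes
left by the previous stages, but uses only a proportion `2⁻⁽ᵏ⁺²⁾` of the blocks to do so, so that at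
least half of each period always remains to be filled.
-/

open Filter Set Topology
open SymbolicDynamics.FullShift (shift cylinder shift_add shift_apply isOpen_cylinder
  isClosed_cylinder continuous_shift shift_zero)

/-! ### Subshifts and their languages -/

section Subshift

variable {A : Type*} {S X : Set (ℤ → Bool)}

lemma shiftMap_eq_shift : shiftMap = shift (1 : ℤ) := by
  funext x n
  rw [shiftMap, shift_apply, add_comm]

lemma continuous_shiftMap : Continuous shiftMap :=
  shiftMap_eq_shift ▸ continuous_shift 1

lemma shift_mem (hX : shiftMap '' X = X) {x : ℤ → Bool} (hx : x ∈ X) (i : ℤ) : shift i x ∈ X := by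
  rw [shiftMap_eq_shift] at hX
  induction i with
  | zero => simpa using hx
  | succ i ih => exact shift_add (i : ℤ) 1 x ▸ hX ▸ mem_image_of_mem _ ih
  | pred i ih =>
    obtain ⟨z, hz, hzx⟩ := hX.symm ▸ ih
    rwa [sub_eq_add_neg, shift_add, ← hzx, ← shift_add, add_neg_cancel, shift_zero]

lemma mem_closure_iff_forall_cylinder [TopologicalSpace A] [DiscreteTopology A] {S : Set (ℤ → A)}
    {x : ℤ → A} : x ∈ closure S ↔ ∀ U : Finset ℤ, ∃ z ∈ S, z ∈ cylinder U x := by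
  refine ⟨fun hx U => ?_, fun h => mem_closure_iff.2 fun o ho hxo => ?_⟩
  · obtain ⟨z, hzU, hzS⟩ := mem_closure_iff.1 hx _ (isOpen_cylinder U x) fun _ _ => rfl
    exact ⟨z, hzS, hzU⟩
  · obtain ⟨U, u, hu, huo⟩ := isOpen_pi_iff.1 ho x hxo
    obtain ⟨z, hzS, hzU⟩ := h U
    exact ⟨z, huo fun i hi => hzU i hi ▸ (hu i hi).2, hzS⟩

lemma isSubshift_closure (hne : S.Nonempty) (hS : shiftMap '' S = S) : IsSubshift (closure S) :=
  ⟨hne.closure, isClosed_closure, by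
    rw [image_closure_of_isCompact isClosed_closure.isCompact continuous_shiftMap.continuousOn, hS]⟩

theorem isMinimalSubshift_closure (hne : S.Nonempty) (hS : shiftMap '' S = S)
    (hrec : ∀ x ∈ S, ∀ U : Finset ℤ, ∃ R : Finset ℤ, ∀ z ∈ S, ∃ i ∈ R, shift i z ∈ cylinder U x) :
    IsMinimalSubshift (closure S) := by
  refine ⟨isSubshift_closure hne hS, fun Y hYS hYc hY ⟨z, hz⟩ =>
    hYS.antisymm (closure_minimal (fun x hx => ?_) hYc)⟩
  rw [← hYc.closure_eq, mem_closure_iff_forall_cylinder]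
  intro U
  obtain ⟨R, hR⟩ := hrec x hx U
  have hclosed : IsClosed (⋃ i ∈ R, shift i ⁻¹' cylinder U x) :=
    isClosed_biUnion_finset fun i _ => (isClosed_cylinder U x).preimage (continuous_shift i)
  have hcover : closure S ⊆ ⋃ i ∈ R, shift i ⁻¹' cylinder U x :=
    closure_minimal (fun z hz => by simpa using hR z hz) hclosed
  obtain ⟨i, -, hi⟩ := mem_iUnion₂.1 (hcover (hYS hz))
  exact ⟨shift i z, shift_mem hY hz i, hi⟩

lemma lang_eq_image (X : Set (ℤ → Bool)) (n : ℕ) :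
    Lang X n = (fun x (k : Fin n) => x (k : ℕ)) '' X :=
  by
  ext w
  simp only [Lang, mem_ofPred_eq, mem_image, funext_iff, eq_comm]

lemma lang_range {ι : Type*} (x : ι → ℤ → Bool) (n : ℕ) :
    Lang (range x) n = range fun i (k : Fin n) => x i (k : ℕ) := by
  rw [lang_eq_image, ← range_comp]
  rfl

lemma lang_closure (S : Set (ℤ → Bool)) (n : ℕ) : Lang (closure S) n = Lang S n := by
  ext w
  refine ⟨fun ⟨x, hx, hw⟩ => ?_, fun ⟨x, hx, hw⟩ => ⟨x, subset_closure hx, hw⟩⟩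
  obtain ⟨z, hz, hzx⟩ := mem_closure_iff_forall_cylinder.1 hx
    (Finset.univ.image fun k : Fin n => ((k : ℕ) : ℤ))
  exact ⟨z, hz, fun k => (hw k).trans (hzx _ (Finset.mem_image_of_mem _ (Finset.mem_univ k))).symm⟩

end Subshift

/-! ### Entropy -/

section Entropy

variable {X : Set (ℤ → Bool)}

lemma ncard_lang_pos (hne : X.Nonempty) (n : ℕ) : 0 < (Lang X n).ncard := by
  rw [ncard_pos, lang_eq_image]
  exact hne.image _

lemma ncard_lang_add_le (hX : shiftMap '' X = X) (m n : ℕ) :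
    (Lang X (m + n)).ncard ≤ (Lang X m).ncard * (Lang X n).ncard := by
  rw [← ncard_prod]
  refine ncard_le_ncard_of_injOn (Fin.appendEquiv m n).symm ?_ (Equiv.injective _).injOn
  rintro w ⟨x, hx, hw⟩
  exact ⟨⟨x, hx, fun k => hw _⟩, shift m x, shift_mem hX hx m, fun k => by
    simpa using hw (Fin.natAdd m k)⟩

lemma subadditive_log_ncard_lang (hne : X.Nonempty) (hX : shiftMap '' X = X) :
    Subadditive fun n => Real.log (Lang X n).ncard := by
  intro m n
  have hpos (n : ℕ) : (0 : ℝ) < (Lang X n).ncard := mod_cast ncard_lang_pos hne n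
  rw [← Real.log_mul (hpos m).ne' (hpos n).ne']
  exact Real.log_le_log (hpos _) (mod_cast ncard_lang_add_le hX m n)

theorem exists_pos_tendsto_log_ncard_lang_div (hne : X.Nonempty) (hX : shiftMap '' X = X) {c : ℝ}
    (hc : 0 < c) (hfreq : ∃ᶠ n : ℕ in atTop, c ≤ Real.log (Lang X n).ncard / n) :
    ∃ h : ℝ, 0 < h ∧
      Tendsto (fun n : ℕ => Real.log (Lang X n).ncard / (n : ℝ)) atTop (𝓝 h) := by
  have hbdd : BddBelow (range fun n : ℕ => Real.log (Lang X n).ncard / (n : ℝ)) :=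
    ⟨0, forall_mem_range.2 fun n => div_nonneg (Real.log_natCast_nonneg _) n.cast_nonneg⟩
  have hlim := (subadditive_log_ncard_lang hne hX).tendsto_lim hbdd
  exact ⟨_, hc.trans_le (ge_of_tendsto_of_frequently hlim hfreq), hlim⟩

theorem infinite_of_tendsto_log_ncard_lang_div {h : ℝ} (hpos : 0 < h)
    (hlim : Tendsto (fun n : ℕ => Real.log (Lang X n).ncard / (n : ℝ)) atTop (𝓝 h)) :
    X.Infinite := by
  intro hfin
  have hle (n : ℕ) : Real.log (Lang X n).ncard ≤ X.ncard :=
    (Real.log_le_self (Nat.cast_nonneg _)).trans <| by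
      rw [lang_eq_image]
      exact_mod_cast ncard_image_le hfin
  exact hpos.not_ge <| le_of_tendsto_of_tendsto' hlim
    (tendsto_const_div_atTop_nhds_zero_nat (X.ncard : ℝ)) fun n => by gcongr; exact hle n

lemma two_pow_card_le_ncard {ι : Type*} [Finite ι] {W : Set (ι → Bool)} {H : Finset ι}
    (hW : ∀ f : ι → Bool, ∃ w ∈ W, ∀ i ∈ H, w i = f i) : 2 ^ H.card ≤ W.ncard := by
  classical
  have himage : H.restrict '' W = univ := by
    refine eq_univ_of_forall fun g => ?_
    obtain ⟨w, hw, hwg⟩ := hW fun i => if hi : i ∈ H then g ⟨i, hi⟩ else false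
    exact ⟨w, hw, funext fun i => by simp [hwg i i.2]⟩
  calc 2 ^ H.card = (H.restrict '' W).ncard := by simp [himage, ncard_univ]
    _ ≤ W.ncard := ncard_image_le

end Entropy

/-! ### Reading a sequence along a line -/

/-- The sequence `y` read along the line of slope `α` and intercept `s`. -/
noncomputable def reading {A : Type*} (y : ℤ → A) (α s : ℝ) : ℤ → A := fun j => y ⌊s + j * α⌋

/-- The subshift generated by all readings of `y` along lines of slope `α`. -/
def readingShift (y : ℤ → Bool) (α : ℝ) : Set (ℤ → Bool) := closure (range (reading y α))

section Reading

variable {A : Type*}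

lemma shift_reading (y : ℤ → A) (α s : ℝ) (i : ℤ) :
    shift i (reading y α s) = reading y α (s + i * α) := by
  funext j
  simp only [shift_apply, reading]
  push_cast
  ring_nf

lemma shiftMap_image_range_reading (y : ℤ → Bool) (α : ℝ) :
    shiftMap '' range (reading y α) = range (reading y α) := by
  have hcomp : shiftMap ∘ reading y α = reading y α ∘ (· + α) := by
    funext s
    simp [shiftMap_eq_shift, shift_reading]
  rw [← range_comp, hcomp, (add_right_surjective α).range_comp]

lemma isSubshift_readingShift (y : ℤ → Bool) (α : ℝ) : IsSubshift (readingShift y α) :=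
  isSubshift_closure (range_nonempty _) (shiftMap_image_range_reading y α)

lemma lang_readingShift (y : ℤ → Bool) (α : ℝ) (n : ℕ) :
    Lang (readingShift y α) n = range fun s (k : Fin n) => reading y α s (k : ℕ) := by
  rw [readingShift, lang_closure, lang_range]

end Reading

/-! ### Language-connectedness -/

section Connected

lemma hammingConnected_range {T : Type*} [TopologicalSpace T] [PreconnectedSpace T] {n : ℕ}
    {w : T → Fin n → Bool} (hw : ∀ s, ∀ᶠ t in 𝓝 s, hammingDist (w s) (w t) ≤ 1) :
    HammingConnected (range w) := by
  let Step : (Fin n → Bool) → (Fin n → Bool) → Prop := fun a b =>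
    a ∈ range w ∧ b ∈ range w ∧ hammingDist a b = 1
  have path_of_le_one {s t : T} (h : hammingDist (w s) (w t) ≤ 1) :
      Relation.ReflTransGen Step (w s) (w t) := by
    rcases h.lt_or_eq with h0 | h1
    · rw [hammingDist_lt_one.1 h0]
    · exact .single ⟨mem_range_self s, mem_range_self t, h1⟩
  rintro _ ⟨s, rfl⟩ _ ⟨t, rfl⟩
  refine PreconnectedSpace.induction₂' (fun s t => Relation.ReflTransGen Step (w s) (w t))
    (fun s => ?_) ⟨fun _ _ _ => Relation.ReflTransGen.trans⟩ s t
  filter_upwards [hw s] with t ht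
  exact ⟨path_of_le_one ht, path_of_le_one (hammingDist_comm (w s) (w t) ▸ ht)⟩

lemma hammingDist_le_one {ι : Type*} [Fintype ι] {β : ι → Type*} [∀ i, DecidableEq (β i)]
    {u v : ∀ i, β i} (huv : {i | u i ≠ v i}.Subsingleton) : hammingDist u v ≤ 1 :=
  Finset.card_le_one.2 fun _ hi _ hj =>
    huv (Finset.mem_filter.1 hi).2 (Finset.mem_filter.1 hj).2

lemma eventually_floor_eq {x : ℝ} (hx : x ∉ range ((↑) : ℤ → ℝ)) : ∀ᶠ t in 𝓝 x, ⌊t⌋ = ⌊x⌋ := by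
  have hlt : (⌊x⌋ : ℝ) < x := (Int.floor_le x).lt_of_ne fun h => hx ⟨_, h⟩
  filter_upwards [Ioo_mem_nhds hlt (Int.lt_floor_add_one x)] with t ht
  exact Int.floor_eq_iff.2 ⟨ht.1.le, ht.2⟩

lemma subsingleton_add_mul_mem_range_intCast {α : ℝ} (hα : Irrational α) (s : ℝ) :
    {j : ℤ | s + j * α ∈ range ((↑) : ℤ → ℝ)}.Subsingleton := by
  rintro i ⟨a, ha⟩ j ⟨b, hb⟩
  by_contra hij
  have hne : i - j ≠ 0 := sub_ne_zero.2 hij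
  refine hα.intCast_mul hne ⟨((a - b : ℤ) : ℚ), ?_⟩
  push_cast
  linarith

theorem languageConnected_readingShift (y : ℤ → Bool) {α : ℝ} (hα : Irrational α) :
    LanguageConnected (readingShift y α) := by
  intro n _
  rw [lang_readingShift]
  refine hammingConnected_range fun s => ?_
  have hfloor : ∀ᶠ t in 𝓝 s, ∀ k : Fin n,
      s + (k : ℕ) * α ∉ range ((↑) : ℤ → ℝ) → ⌊t + (k : ℕ) * α⌋ = ⌊s + (k : ℕ) * α⌋ := by
    refine eventually_all.2 fun k => eventually_imp_distrib_left.2 fun hk => ?_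
    exact (continuous_add_const _).continuousAt.eventually (eventually_floor_eq hk)
  filter_upwards [hfloor] with t ht
  have hint {k : Fin n} (hk : reading y α s (k : ℕ) ≠ reading y α t (k : ℕ)) :
      s + ((k : ℕ) : ℤ) * α ∈ range ((↑) : ℤ → ℝ) := by
    contrapose! hk
    simpa [reading] using congrArg y (ht k (by simpa using hk)).symm
  exact hammingDist_le_one fun k hk l hl => Fin.ext <| Nat.cast_injective (R := ℤ) <|
    subsingleton_add_mul_mem_range_intCast hα s (hint hk) (hint hl)

end Connected

/-! ### Toeplitz sequences and minimality -/

/-- A bi-infinite sequence is Toeplitz if each of its entries recurs along an arithmetic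
progression; the period is allowed to depend on the position. -/
def IsToeplitz {A : Type*} (y : ℤ → A) : Prop :=
  ∀ n, ∃ p : ℕ, 0 < p ∧ ∀ j : ℤ, y (n + j * p) = y n

section Minimal

variable {A : Type*} {y : ℤ → A} {α : ℝ}

lemma IsToeplitz.exists_common_period (hy : IsToeplitz y) (V : Finset ℤ) :
    ∃ p : ℕ, 0 < p ∧ ∀ n ∈ V, ∀ j : ℤ, y (n + j * p) = y n := by
  choose p hp hyp using hy
  refine ⟨∏ n ∈ V, p n, Finset.prod_pos fun n _ => hp n, fun n hn j => ?_⟩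
  obtain ⟨c, hc⟩ := Finset.dvd_prod_of_mem p hn
  rw [hc, Nat.cast_mul, mul_left_comm, mul_comm, hyp]

lemma exists_finset_rotation_mem_Ioo {p : ℝ} (hp : 0 < p) (hα : Irrational (α / p)) {a b : ℝ}
    (hab : a < b) :
    ∃ R : Finset ℤ, ∀ s : ℝ, ∃ i ∈ R, ∃ l : ℤ, s + i * α + l * p ∈ Ioo a b := by
  have : Fact (0 < p) := ⟨hp⟩
  let V : Set (AddCircle p) := (↑) '' Ioo a b
  have hV : IsOpen V := QuotientAddGroup.isOpenMap_coe _ isOpen_Ioo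
  have hcover : (univ : Set (AddCircle p)) ⊆ ⋃ i : ℤ, {t | t + i • (α : AddCircle p) ∈ V} := by
    intro t _
    obtain ⟨i, hi⟩ := (AddCircle.denseRange_zsmul_coe_iff.2 hα).exists_mem_open
      (hV.preimage (continuous_const_add t))
      (((nonempty_Ioo.2 hab).image _).preimage (add_left_surjective t))
    exact mem_iUnion.2 ⟨i, hi⟩
  obtain ⟨R, hR⟩ := isCompact_univ.elim_finite_subcover _
    (fun i => hV.preimage (continuous_add_const (i • (α : AddCircle p)))) hcover
  refine ⟨R, fun s => ?_⟩
  obtain ⟨i, hi, t, ht, hts⟩ := mem_iUnion₂.1 (hR (mem_univ (s : AddCircle p)))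
  obtain ⟨l, hl⟩ := (QuotientAddGroup.eq_iff_sub_mem.1 hts)
  refine ⟨i, hi, l, ?_⟩
  convert ht using 1
  simp only [zsmul_eq_mul] at hl
  linarith

lemma exists_Ioo_floor_eq (s α : ℝ) (U : Finset ℤ) :
    ∃ b > s, ∀ t ∈ Ioo s b, ∀ j ∈ U, ⌊t + j * α⌋ = ⌊s + j * α⌋ := by
  have hfloor : ∀ᶠ t in 𝓝[>] s, ∀ j ∈ U, ⌊t + j * α⌋ = ⌊s + j * α⌋ := by
    refine (eventually_all_finset U).2 fun j _ => ?_
    have hlt : s < ⌊s + j * α⌋ + 1 - j * α := by linarith [Int.lt_floor_add_one (s + j * α)]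
    filter_upwards [Ioo_mem_nhdsGT hlt] with t ht
    exact Int.floor_eq_iff.2
      ⟨by linarith [Int.floor_le (s + j * α), ht.1], by linarith [ht.2]⟩
  exact mem_nhdsGT_iff_exists_Ioo_subset.1 hfloor

theorem IsToeplitz.exists_finset_shift_reading_mem_cylinder (hy : IsToeplitz y)
    (hα : Irrational α) (s₀ : ℝ) (U : Finset ℤ) :
    ∃ R : Finset ℤ, ∀ s, ∃ i ∈ R, shift i (reading y α s) ∈ cylinder U (reading y α s₀) := by
  obtain ⟨b, hb, hfloor⟩ := exists_Ioo_floor_eq s₀ α U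
  obtain ⟨p, hp, hper⟩ := hy.exists_common_period (U.image fun j : ℤ => ⌊s₀ + j * α⌋)
  obtain ⟨R, hR⟩ := exists_finset_rotation_mem_Ioo (Nat.cast_pos.2 hp) (hα.div_natCast hp.ne') hb
  refine ⟨R, fun s => ?_⟩
  obtain ⟨i, hi, l, hl⟩ := hR s
  refine ⟨i, hi, fun j hj => ?_⟩
  have hfloor_eq : ⌊s + i * α + j * α⌋ = ⌊s₀ + j * α⌋ + -l * p := by
    rw [← hfloor _ hl j hj, ← Int.floor_add_intCast]
    push_cast
    ring_nf
  rw [shift_reading, reading, hfloor_eq, hper _ (Finset.mem_image_of_mem _ hj), reading]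

theorem IsToeplitz.isMinimalSubshift_readingShift {y : ℤ → Bool} (hy : IsToeplitz y)
    (hα : Irrational α) : IsMinimalSubshift (readingShift y α) := by
  refine isMinimalSubshift_closure (range_nonempty _) (shiftMap_image_range_reading y α) ?_
  rintro _ ⟨s₀, rfl⟩ U
  simpa only [forall_mem_range] using hy.exists_finset_shift_reading_mem_cylinder hα s₀ U

end Minimal

/-! ### Entropy of readings -/

section ReadingEntropy

variable {y : ℤ → Bool} {α : ℝ}

lemma floor_ceil_div_mul (h0 : 0 < α) (h1 : α ≤ 1) (r : ℕ) : ⌊(⌈r / α⌉₊ : ℝ) * α⌋ = r := by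
  have hlt : (⌈r / α⌉₊ : ℝ) < r / α + 1 := Nat.ceil_lt_add_one (by positivity)
  refine Int.floor_eq_iff.2 ⟨(div_le_iff₀ h0).1 (Nat.le_ceil _), ?_⟩
  calc (⌈r / α⌉₊ : ℝ) * α < (r / α + 1) * α := by gcongr
    _ = r + α := by field_simp
    _ ≤ (r : ℤ) + 1 := by simpa using h1

lemma ncard_lang_orbit_le (h0 : 0 < α) (h1 : α ≤ 1) {N M : ℕ} (hNM : N ≤ M * α) :
    (Lang (range fun m : ℤ => shift m y) N).ncard ≤ (Lang (readingShift y α) M).ncard := by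
  have hceil (r : Fin N) : ⌈(r : ℕ) / α⌉₊ < M := by
    have hlt := Int.lt_floor_add_one ((⌈(r : ℕ) / α⌉₊ : ℝ) * α)
    have hr : ((r : ℕ) : ℝ) + 1 ≤ N := mod_cast r.2
    rw [floor_ceil_div_mul h0 h1] at hlt
    exact_mod_cast lt_of_mul_lt_mul_right ((hlt.trans_le hr).trans_le hNM) h0.le
  let visit (w : Fin M → Bool) (r : Fin N) : Bool := w ⟨⌈(r : ℕ) / α⌉₊, hceil r⟩
  have hsub : Lang (range fun m : ℤ => shift m y) N ⊆ visit '' Lang (readingShift y α) M := by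
    rw [lang_range, lang_readingShift, ← range_comp]
    rintro _ ⟨m, rfl⟩
    refine ⟨m, funext fun r => ?_⟩
    simp [visit, reading, floor_ceil_div_mul h0 h1]
  exact (ncard_le_ncard hsub).trans ncard_image_le

theorem exists_pos_tendsto_readingShift (h0 : 0 < α) (h1 : α ≤ 1) {c : ℝ} (hc : 0 < c)
    (hy : ∃ᶠ N : ℕ in atTop, c * N ≤ Real.log (Lang (range fun m : ℤ => shift m y) N).ncard) :
    ∃ h : ℝ, 0 < h ∧ Tendsto (fun n : ℕ => Real.log (Lang (readingShift y α) n).ncard / (n : ℝ))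
      atTop (𝓝 h) := by
  obtain ⟨hne, -, hshift⟩ := isSubshift_readingShift y α
  have hceil : Tendsto (fun N : ℕ => ⌈N / α⌉₊) atTop atTop :=
    tendsto_nat_ceil_atTop.comp (tendsto_natCast_atTop_atTop.atTop_div_const h0)
  refine exists_pos_tendsto_log_ncard_lang_div hne hshift (c := c * α / 2) (by positivity) ?_
  refine hceil.frequently ((hy.and_eventually (eventually_gt_atTop 0)).mono ?_)
  rintro N ⟨hN, hNpos⟩
  have hN1 : (1 : ℝ) ≤ N := mod_cast hNpos
  have hlen : ⌈N / α⌉₊ * α ≤ 2 * N := by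
    have hlt := Int.lt_floor_add_one ((⌈N / α⌉₊ : ℝ) * α)
    rw [floor_ceil_div_mul h0 h1, Int.cast_natCast] at hlt
    linarith
  have horbit : ((Lang (range fun m : ℤ => shift m y) N).ncard : ℝ)
      ≤ (Lang (readingShift y α) ⌈N / α⌉₊).ncard :=
    mod_cast ncard_lang_orbit_le h0 h1 ((div_le_iff₀ h0).1 (Nat.le_ceil _))
  rw [le_div_iff₀ (Nat.cast_pos.2 (Nat.ceil_pos.2 (by positivity)))]
  calc c * α / 2 * ⌈N / α⌉₊ = c / 2 * (⌈N / α⌉₊ * α) := by ring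
    _ ≤ c / 2 * (2 * N) := by gcongr
    _ = c * N := by ring
    _ ≤ Real.log (Lang (range fun m : ℤ => shift m y) N).ncard := hN
    _ ≤ Real.log (Lang (readingShift y α) ⌈N / α⌉₊).ncard := by
      refine Real.log_le_log ?_ horbit
      exact_mod_cast ncard_lang_pos (range_nonempty _) N

end ReadingEntropy

/-! ### A Toeplitz sequence of positive entropy -/

lemma card_filter_add_mod_lt_le {q m : ℕ} (hqm : q ∣ m) (a L : ℕ) :
    Finset.card {r : Fin m | (r + a) % q < L} ≤ L * (m / q) := by
  calc _ ≤ (Finset.range L ×ˢ Finset.range (m / q)).card := by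
        refine Finset.card_le_card_of_injOn (fun r => ((r + a) % q, r / q)) (fun r hr => ?_) ?_
        · simpa using ⟨(Finset.mem_filter.1 hr).2, Nat.div_lt_div_of_lt_of_dvd hqm r.2⟩
        · intro r _ r' _ h
          obtain ⟨hmod, hdiv⟩ := Prod.mk.inj h
          have hmod' : (r : ℕ) % q = r' % q := Nat.ModEq.add_right_cancel' a hmod
          exact Fin.ext (by rw [← Nat.div_add_mod (r : ℕ) q, hdiv, hmod', Nat.div_add_mod])
    _ = L * (m / q) := by simp

namespace HoleFilling

/-- The period of the positions filled before stage `k`: a period at stage `k + 1` consists of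
`2 ^ (period k + k + 2)` blocks of length `period k`. -/
def period : ℕ → ℕ
  | 0 => 1
  | k + 1 => period k * 2 ^ (period k + k + 2)

/-- The position of `n` within its period at stage `k + 1`. The periods are offset by one block so
that both `0` and `-1` lie in the first two blocks: this makes every integer get filled. -/
def offset (k : ℕ) (n : ℤ) : ℕ := ((n + period k) % period (k + 1)).toNat

/-- Stage `k` fills whatever is still unfilled in the first `2 ^ period k` blocks, one block for
each pattern of length `period k`. -/
abbrev Filled (k : ℕ) (n : ℤ) : Prop := offset k n < period k * 2 ^ period k

lemma period_pos (k : ℕ) : 0 < period k := by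
  induction k with
  | zero => exact one_pos
  | succ k ih => exact Nat.mul_pos ih (Nat.two_pow_pos _)

lemma lt_period (k : ℕ) : k < period k := by
  induction k with
  | zero => exact one_pos
  | succ k ih =>
    calc k + 1 ≤ period k := ih
      _ < period k * 2 ^ (period k + k + 2) :=
        lt_mul_of_one_lt_right (period_pos k) (Nat.one_lt_two_pow (by lia))

lemma period_dvd_period {i k : ℕ} (h : i ≤ k) : period i ∣ period k := by
  induction h with
  | refl => rfl
  | step _ ih => exact ih.trans (Dvd.intro _ rfl)

lemma period_succ_eq (k : ℕ) : period (k + 1) = period k * 2 ^ period k * 2 ^ (k + 2) := by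
  rw [period, mul_assoc, ← pow_add, add_assoc]

lemma offset_add_mul_period {k K : ℕ} (h : k < K) (n j : ℤ) :
    offset k (n + j * period K) = offset k n := by
  obtain ⟨c, hc⟩ := period_dvd_period (Nat.succ_le_of_lt h)
  rw [offset, offset, hc, add_right_comm, Nat.cast_mul, mul_left_comm, Int.add_mul_emod_self_left]

lemma offset_natCast (k r : ℕ) : offset k r = (r + period k) % period (k + 1) := by
  rw [offset]
  exact_mod_cast Int.toNat_natCast _

lemma offset_sub_period {k t : ℕ} (ht : t < period (k + 1)) : offset k (t - period k) = t := by
  rw [offset, sub_add_cancel, Int.emod_eq_of_lt (by lia) (mod_cast ht), Int.toNat_natCast]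

lemma exists_filled (n : ℤ) : ∃ k, Filled k n := by
  set k := n.natAbs
  have hk := lt_period k
  have htwo : period k * 2 ≤ period k * 2 ^ period k :=
    Nat.mul_le_mul_left _ (Nat.le_self_pow (by lia) 2)
  have hle : period k * 2 ^ period k ≤ period (k + 1) :=
    period_succ_eq k ▸ Nat.le_mul_of_pos_right _ (Nat.two_pow_pos _)
  have hoffset : offset k n = (n + period k).toNat := by
    simpa [show ((n + period k).toNat : ℤ) = n + period k by lia] using
      offset_sub_period (k := k) (t := (n + period k).toNat) (by lia)
  exact ⟨k, by lia⟩

/-- The stage at which the position `n` is filled. -/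
def stage (n : ℤ) : ℕ := Nat.find (exists_filled n)

/-- The Toeplitz sequence obtained by hole filling: at stage `k`, the unfilled positions of the
`d`-th block receive the corresponding binary digits of `d`. -/
def seq (n : ℤ) : Bool :=
  (offset (stage n) n / period (stage n)).testBit (offset (stage n) n % period (stage n))

/-- The positions in `[0, period k)` left unfilled before stage `k`. -/
def holes (k : ℕ) : Finset (Fin (period k)) := {r | ∀ i < k, ¬ Filled i (r : ℕ)}

lemma stage_eq_iff {n : ℤ} {k : ℕ} : stage n = k ↔ Filled k n ∧ ∀ i < k, ¬ Filled i n :=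
  Nat.find_eq_iff _

theorem isToeplitz_seq : IsToeplitz seq := by
  intro n
  refine ⟨period (stage n + 1), period_pos _, fun j => ?_⟩
  have hoffset {i : ℕ} (hi : i ≤ stage n) :
      offset i (n + j * period (stage n + 1)) = offset i n :=
    offset_add_mul_period (Nat.lt_succ_of_le hi) n j
  have hstage : stage (n + j * period (stage n + 1)) = stage n := by
    obtain ⟨hfilled, hmin⟩ := stage_eq_iff.1 (rfl : stage n = stage n)
    refine stage_eq_iff.2 ⟨by rwa [Filled, hoffset le_rfl], fun i hi => ?_⟩
    rw [Filled, hoffset hi.le]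
    exact hmin i hi
  rw [seq, hstage, hoffset le_rfl, seq]

lemma exists_forall_mem_holes_seq_eq (k : ℕ) (f : Fin (period k) → Bool) :
    ∃ m : ℤ, ∀ r ∈ holes k, seq (m + (r : ℕ)) = f r := by
  set d := Nat.ofBits f
  refine ⟨(d - 1) * period k, fun r hr => ?_⟩
  have hlt : period k * d + r < period k * 2 ^ period k :=
    calc period k * d + r < period k * (d + 1) := by rw [mul_add_one]; lia
      _ ≤ period k * 2 ^ period k := Nat.mul_le_mul_left _ (Nat.ofBits_lt_two_pow f)
  have hoffset : offset k ((d - 1) * period k + (r : ℕ)) = period k * d + r := by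
    convert offset_sub_period (k := k) (t := period k * d + r) ?_ using 2
    · push_cast
      ring
    · exact hlt.trans_le (period_succ_eq k ▸ Nat.le_mul_of_pos_right _ (Nat.two_pow_pos _))
  have hstage : stage ((d - 1) * period k + (r : ℕ)) = k := by
    refine stage_eq_iff.2 ⟨by rwa [Filled, hoffset], fun i hi => ?_⟩
    rw [Filled, add_comm, offset_add_mul_period hi]
    exact (Finset.mem_filter.1 hr).2 i hi
  rw [seq, hstage, hoffset, Nat.mul_add_div (period_pos k), Nat.div_eq_of_lt r.2, add_zero,
    Nat.mul_add_mod, Nat.mod_eq_of_lt r.2, Nat.testBit_ofBits_lt]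

lemma card_filled_mul_two_pow_le {i k : ℕ} (hik : i < k) :
    Finset.card {r : Fin (period k) | Filled i (r : ℕ)} * 2 ^ (i + 2) ≤ period k := by
  have hdvd := period_dvd_period (Nat.succ_le_of_lt hik)
  have hcard := card_filter_add_mod_lt_le hdvd (period i) (period i * 2 ^ period i)
  calc Finset.card {r : Fin (period k) | Filled i (r : ℕ)} * 2 ^ (i + 2)
      ≤ period i * 2 ^ period i * (period k / period (i + 1)) * 2 ^ (i + 2) := by
        gcongr
        simpa only [Filled, offset_natCast] using hcard
    _ = period (i + 1) * (period k / period (i + 1)) := by rw [period_succ_eq]; ring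
    _ = period k := Nat.mul_div_cancel' hdvd

lemma period_le_two_mul_card_holes (k : ℕ) : (period k : ℝ) ≤ 2 * (holes k).card := by
  let filled (i : ℕ) : Finset (Fin (period k)) := {r | Filled i (r : ℕ)}
  have hfilled (i : ℕ) (hi : i ∈ Finset.range k) :
      ((filled i).card : ℝ) ≤ period k / 4 * (1 / 2) ^ i := by
    have h : ((filled i).card : ℝ) * 2 ^ (i + 2) ≤ period k :=
      mod_cast card_filled_mul_two_pow_le (Finset.mem_range.1 hi)
    rw [← le_div_iff₀ (by positivity)] at h
    exact h.trans_eq (by rw [pow_add, one_div_pow]; field_simp; norm_num)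
  have hcompl : (holes k)ᶜ = (Finset.range k).biUnion filled := by
    ext r
    simp [holes, filled]
  have hcard : ((holes k)ᶜ.card : ℝ) ≤ period k / 2 :=
    calc ((holes k)ᶜ.card : ℝ) ≤ ∑ i ∈ Finset.range k, ((filled i).card : ℝ) := by
          rw [hcompl]
          exact_mod_cast Finset.card_biUnion_le
      _ ≤ ∑ i ∈ Finset.range k, period k / 4 * (1 / 2 : ℝ) ^ i := Finset.sum_le_sum hfilled
      _ ≤ period k / 4 * 2 := by
          rw [← Finset.mul_sum]
          gcongr
          exact sum_geometric_two_le k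
      _ = period k / 2 := by ring
  have hadd : ((holes k).card : ℝ) + (holes k)ᶜ.card = period k := by
    exact_mod_cast (holes k).card_add_card_compl.trans (Fintype.card_fin _)
  linarith

lemma two_pow_card_holes_le_ncard_lang (k : ℕ) :
    2 ^ (holes k).card ≤ (Lang (range fun m : ℤ => shift m seq) (period k)).ncard := by
  refine two_pow_card_le_ncard fun f => ?_
  obtain ⟨m, hm⟩ := exists_forall_mem_holes_seq_eq k f
  exact ⟨_, ⟨shift m seq, mem_range_self m, fun _ => rfl⟩, hm⟩

theorem frequently_le_log_ncard_lang_orbit_seq : ∃ᶠ N : ℕ in atTop,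
    Real.log 2 / 2 * N ≤ Real.log (Lang (range fun m : ℤ => shift m seq) N).ncard := by
  have hperiod : Tendsto period atTop atTop :=
    tendsto_atTop_mono (fun k => (lt_period k).le) tendsto_id
  refine hperiod.frequently (Frequently.of_forall fun k => ?_)
  calc Real.log 2 / 2 * period k ≤ Real.log 2 / 2 * (2 * (holes k).card) := by
        gcongr
        exact period_le_two_mul_card_holes k
    _ = Real.log (2 ^ (holes k).card) := by rw [Real.log_pow]; ring
    _ ≤ Real.log (Lang (range fun m : ℤ => shift m seq) (period k)).ncard :=
        Real.log_le_log (by positivity) (mod_cast two_pow_card_holes_le_ncard_lang k)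

end HoleFilling

theorem exists_minimal_language_connected_positive_entropy :
    ∃ X : Set (ℤ → Bool), IsMinimalSubshift X ∧ X.Infinite ∧ LanguageConnected X ∧
      ∃ h : ℝ, 0 < h ∧
        Filter.Tendsto (fun n : ℕ => Real.log ((Lang X n).ncard) / (n : ℝ))
          Filter.atTop (nhds h) := by
  have hα : Irrational (√2)⁻¹ := irrational_sqrt_two.inv
  have hα_pos : 0 < (√2)⁻¹ := by positivity
  have hα_le : (√2)⁻¹ ≤ 1 := inv_le_one_of_one_le₀ (Real.one_le_sqrt.2 one_le_two)
  obtain ⟨h, h_pos, h_lim⟩ := exists_pos_tendsto_readingShift hα_pos hα_le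
    (half_pos (Real.log_pos one_lt_two)) HoleFilling.frequently_le_log_ncard_lang_orbit_seq
  exact ⟨readingShift HoleFilling.seq (√2)⁻¹,
    HoleFilling.isToeplitz_seq.isMinimalSubshift_readingShift hα,
    infinite_of_tendsto_log_ncard_lang_div h_pos h_lim,
    languageConnected_readingShift HoleFilling.seq hα, h, h_pos, h_lim⟩
end
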